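/- Let $K$ be an algebraically closed field and let $\Gamma$ be a Brauer tree with multiplicity one: a finite tree with a cyclic ordering of the edges around each vertex. Let $Q$ be its Brauer quiver: its vertices are the edges of $\Gamma$, and for each vertex $c$ of $\Gamma$ and each edge $i$ at $c$ there is an arrow $i\to j$, where $j$ follows $i$ in the cyclic ordering at $c$ (a loop if $c$ is a leaf). The arrows belonging to $c$ form the $A$-cycle of $c$; each vertex of $Q$ lies on exactly two $A$-cycles. Let $A=KQ/I$ (paths composed from left to right), where $I$ is generated by the products of two consecutive arrows on different $A$-cycles and by the differences of the two full $A$-cycles starting at the same vertex. Let $K^b(A)$ be the bounded homotopy category of finitely generated projective left $A$-modules. A *diagram* is a path without self-intersections on $Q$, with more than one vertex, consisting of directed subpaths of $A$-cycles and changing its orientation and its $A$-cycle at each inner vertex where two such subpaths meet. These vertices and the two end points are the *marked* vertices; they are alternately sources and sinks. The complex of a diagram is $\bigoplus_i Ae_i\to\bigoplus_j Ae_j$ in degrees $0$ and $1$, where $i$ runs over the sources and $j$ over the sinks, with components given by multiplication by the directed subpaths. A *degree-one sink* is a sink that is an end point of the diagram. Let $T$ be a basic tilting complex over $A$ concentrated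 in degrees $0$ and $1$, and let $\Delta$ be the Brauer tree (with multiplicity one) of $\mathrm{End}_{K^b(A)}(T)$; its edges correspond to the indecomposable summands of $T$, and arrows $x\to y$ of its Brauer quiver correspond to morphisms from the summand $x$ to the summand $y$. Let $\Upsilon$ be an $A$-cycle of $A$, and let $z$ be a vertex of $\Delta$ corresponding to the sinks on $\Upsilon$, i.e. the edges of $\Delta$ incident to $z$ are exactly the summands of $T$ that are complexes of diagrams having a degree-one sink on $\Upsilon$ and no other vertex on $\Upsilon$, or stalk complexes in degree $1$ of modules $Ae_i$ with $i$ on $\Upsilon$. To such a summand associate the sequence of the marked vertices of its diagram, starting from its degree-one sink on $\Upsilon$, or the one-term sequence $(i)$ for the stalk complex of $Ae_i$. Fix a vertex $g$ of $\Upsilon$, and order the vertices of $\Upsilon$ linearly so that $g$ is the greatest and the vertices decrease along the arrows starting from $g$. Compare the sequences lexicographically: first vertices are compared by this order on $\Upsilon$; if the first $k\ge 1$ terms coincide, the $(k+1)$-st terms lie on the $A$-cycle through the common $k$-th term $v$ other than the one containing the previous terms ($\Upsilon$ for $k=1$), and they are compared by the linear order on it in which $v$ is the greatest and the vertices decrease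 along the arrows starting from $v$; an empty spot is least at an odd position and greatest at an even position. Then this is a (strict) linear order on the edges of $\Delta$ incident to $z$, and the cyclic ordering of these edges in $\Delta$ is the one glued from it: the edge that follows $x$ around $z$ is the greatest edge smaller than $x$, or the greatest edge of all if $x$ is the least one. -/

import Mathlib

open CategoryTheory CategoryTheory.Limits

universe u v w

noncomputable section

/-! ### Brauer trees -/

/-- A Brauer tree of multiplicity one on a vertex set `V`: a finite tree together with a cyclic
ordering of the edges around each vertex.  A dart `d` of the tree is the same thing as an edge
`d.edge` together with one of its two end points `d.fst`; the cyclic ordering at the vertex `c` is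
the restriction of the permutation `next` to the darts with `d.fst = c`. -/
structure BrauerTree (V : Type v) [Finite V] where
  /-- the underlying graph -/
  graph : SimpleGraph V
  isTree : graph.IsTree
  /-- the edge that follows `d.edge` in the cyclic ordering around the vertex `d.fst` -/
  next : Equiv.Perm graph.Dart
  fst_next : ∀ d, (next d).fst = d.fst
  /-- all the edges around a vertex form one single cycle -/
  sameCycle : ∀ d d', d.fst = d'.fst → next.SameCycle d d'

namespace BrauerTree

variable {V : Type v} [Finite V] (Γ : BrauerTree V)

/-- The edges of the Brauer tree, i.e. the vertices of its Brauer quiver. -/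
abbrev Edge : Type v := Γ.graph.edgeSet

/-- The half-edges of the Brauer tree.  A half-edge `d` stands for the vertex `d.edge` of the
Brauer quiver, seen as a member of the `A`-cycle attached to the vertex `d.fst` of the tree.
Every quiver vertex lies on exactly two `A`-cycles; `d.symm` is the same quiver vertex seen on the
other one. -/
abbrev Dart : Type v := Γ.graph.Dart

/-- The edge underlying a half-edge. -/
def toEdge (d : Γ.Dart) : Γ.Edge := ⟨d.edge, d.edge_mem⟩

instance : Fintype Γ.Edge := Fintype.ofFinite _

/-- The number of arrows of the `A`-cycle `d.fst` on the way from the half-edge `d` to the half-edge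
`d'` (a half-edge at the same vertex). -/
def dist (d d' : Γ.Dart) : ℕ := sInf {k : ℕ | (Γ.next)^[k] d = d'}

/-! ### The Brauer tree algebra -/

/-- Generators of the Brauer tree algebra: the trivial paths, indexed by the edges, and the arrows of
the Brauer quiver, indexed by the half-edges: `arrow d` is the arrow from `d.edge` to
`(Γ.next d).edge` on the `A`-cycle `d.fst`.  (At a leaf this arrow is a loop.) -/
inductive Gen : Type v
  | idem (i : Γ.Edge) : Gen
  | arrow (d : Γ.Dart) : Gen

section Algebra

variable (K : Type u) [Field K]

/-- A trivial path in the free algebra. -/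
abbrev freeIdem (i : Γ.Edge) : FreeAlgebra K Γ.Gen := FreeAlgebra.ι K (Gen.idem i)

/-- An arrow in the free algebra. -/
abbrev freeArrow (d : Γ.Dart) : FreeAlgebra K Γ.Gen := FreeAlgebra.ι K (Gen.arrow d)

/-- The product of the `k` consecutive arrows of the `A`-cycle `d.fst` that starts in `d.edge`. -/
def freePath (d : Γ.Dart) (k : ℕ) : FreeAlgebra K Γ.Gen :=
  ((List.range k).map fun j => Γ.freeArrow K ((Γ.next)^[j] d)).prod

/-- The defining relations of the Brauer tree algebra.  The first four families are those of the path
algebra of the Brauer quiver (a product `a * b` is the path `a` followed by the path `b`). -/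
inductive Rel : FreeAlgebra K Γ.Gen → FreeAlgebra K Γ.Gen → Prop
  | idem_mul_self (i : Γ.Edge) : Rel (Γ.freeIdem K i * Γ.freeIdem K i) (Γ.freeIdem K i)
  | idem_mul_idem (i j : Γ.Edge) (h : i ≠ j) : Rel (Γ.freeIdem K i * Γ.freeIdem K j) 0
  | sum_idem : Rel (∑ i : Γ.Edge, Γ.freeIdem K i) 1
  | idem_mul_arrow (d : Γ.Dart) :
      Rel (Γ.freeIdem K (Γ.toEdge d) * Γ.freeArrow K d) (Γ.freeArrow K d)
  | arrow_mul_idem (d : Γ.Dart) :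
      Rel (Γ.freeArrow K d * Γ.freeIdem K (Γ.toEdge (Γ.next d))) (Γ.freeArrow K d)
  /-- the product of two composable arrows on different `A`-cycles is zero -/
  | arrow_mul_arrow (d : Γ.Dart) :
      Rel (Γ.freeArrow K d * Γ.freeArrow K (Γ.next d).symm) 0
  /-- the two `A`-cycles through a quiver vertex, started in that vertex, are equal -/
  | cycle_eq (d : Γ.Dart) :
      Rel (Γ.freePath K d (Function.minimalPeriod Γ.next d))
        (Γ.freePath K d.symm (Function.minimalPeriod Γ.next d.symm))

/-- The basic Brauer tree algebra over `K` of the Brauer tree `Γ` with multiplicity one. -/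
def Alg : Type (max u v) := RingQuot (Γ.Rel K)

instance : Ring (Γ.Alg K) := RingQuot.instRing (Γ.Rel K)

instance : Algebra K (Γ.Alg K) := RingQuot.instAlgebra (Γ.Rel K)

/-- The quotient map from the free algebra on the trivial paths and the arrows. -/
def quot : FreeAlgebra K Γ.Gen →ₐ[K] Γ.Alg K := RingQuot.mkAlgHom K (Γ.Rel K)

/-- The idempotent `e_i` of the Brauer tree algebra. -/
def e (i : Γ.Edge) : Γ.Alg K := Γ.quot K (Γ.freeIdem K i)

/-- The path on the `A`-cycle `d.fst` from `d.edge` to `d'.edge`, for two different half-edges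
`d`, `d'` at the same vertex. -/
def path (d d' : Γ.Dart) : Γ.Alg K :=
  Γ.quot K (Γ.freePath K d (Γ.dist d d'))

/-! ### Projective modules and complexes -/

/-- The indecomposable projective left module `A e_i`. -/
abbrev Proj (i : Γ.Edge) : Ideal (Γ.Alg K) := Ideal.span {Γ.e K i}

/-- The homomorphism `A e_i → A e_j`, `x ↦ x * p * e_j`; for `p` in `e_i A e_j` this is the
multiplication by `p` on the right. -/
def mulMap (i j : Γ.Edge) (p : Γ.Alg K) : Γ.Proj K i →ₗ[Γ.Alg K] Γ.Proj K j :=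
  ((LinearMap.toSpanSingleton (Γ.Alg K) (Γ.Alg K) (p * Γ.e K j)).comp
    (Submodule.subtype (Γ.Proj K i))).codRestrict (Γ.Proj K j) (fun x => by
      have h : (x : Γ.Alg K) * p * Γ.e K j ∈ Γ.Proj K j :=
        Ideal.mul_mem_left _ _ (Ideal.subset_span rfl)
      simpa [LinearMap.toSpanSingleton_apply, mul_assoc] using h)

/-- Cochain complexes of left modules over the Brauer tree algebra. -/
abbrev Cplx := CochainComplex (ModuleCat.{max u v} (Γ.Alg K)) ℤ

/-- The homotopy category of complexes of left modules over the Brauer tree algebra. -/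
abbrev HoCat := HomotopyCategory (ModuleCat.{max u v} (Γ.Alg K)) (ComplexShape.up ℤ)

/-- A complex, seen as an object of the homotopy category. -/
abbrev toHo (C : Γ.Cplx K) : Γ.HoCat K := (HomotopyCategory.quotient _ _).obj C

variable {Γ K}

/-- `C` is a bounded complex of finitely generated projective modules. -/
def IsPerfect (C : Γ.Cplx K) : Prop :=
  (∀ k, Module.Finite (Γ.Alg K) (C.X k) ∧ Module.Projective (Γ.Alg K) (C.X k)) ∧
    ∃ a b : ℤ, ∀ k, (k < a ∨ b < k) → IsZero (C.X k)

/-- `C` is concentrated in the degrees `0` and `1`. -/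
def IsTwoTerm (C : Γ.Cplx K) : Prop := ∀ k : ℤ, k ≠ 0 → k ≠ 1 → IsZero (C.X k)

/-- `T` is a tilting complex: it is perfect, it has no non-zero maps to its non-trivial shifts (for
perfect complexes, homomorphisms in the derived category are homotopy classes of chain maps), and
every full triangulated subcategory closed under direct summands that contains `T` contains all
perfect complexes. -/
def IsTilting (T : Γ.Cplx K) : Prop :=
  IsPerfect T ∧
  (∀ k : ℤ, k ≠ 0 → ∀ f : Γ.toHo K T ⟶ (Γ.toHo K T)⟦k⟧, f = 0) ∧
  ∀ P : ObjectProperty (Γ.HoCat K), P.IsTriangulated → P.IsStableUnderRetracts →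
    P (Γ.toHo K T) → ∀ C : Γ.Cplx K, IsPerfect C → P (Γ.toHo K C)

/-- `T` is basic: it has no repeated non-zero direct summand in the homotopy category. -/
def IsBasic (T : Γ.Cplx K) : Prop :=
  ∀ X : Γ.HoCat K, Nonempty (Retract (X ⊞ X) (Γ.toHo K T)) → IsZero X

variable (K) in
/-- The stalk complex of the projective module `A e_i`, concentrated in degree `k`. -/
def stalk (k : ℤ) (i : Γ.Edge) : Γ.Cplx K :=
  (HomologicalComplex.single _ (ComplexShape.up ℤ) k).obj (ModuleCat.of _ (Γ.Proj K i))

end Algebra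

/-! ### Diagrams -/

/-- A diagram of a minimal projective presentation, together with a direction in which it is
traversed: a path without self-intersections on the Brauer quiver which changes its `A`-cycle and
its orientation in each of its marked vertices.  Such a path is given by the sequence
`c₀, i₁, c₁, i₂, c₂, …, i_m, c_m` of its marked vertices `i₁, …, i_m` (`m ≥ 2`, edges of the tree),
and of the `A`-cycles `c₁, …, c_{m-1}` (vertices of the tree) that carry the directed subpaths between
consecutive marked vertices, `c₀` and `c_m` being the second `A`-cycles through the end points `i₁`,
`i_m`; that is, by a path of length at least two in the tree.  The marked vertices are alternately
sinks and sources. -/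
structure Diagram where
  /-- the second `A`-cycle through the first marked vertex -/
  first : V
  /-- the second `A`-cycle through the last marked vertex -/
  last : V
  /-- the path in the tree whose edges are the marked vertices -/
  walk : Γ.graph.Walk first last
  isPath : walk.IsPath
  two_le : 2 ≤ walk.length
  /-- whether the first marked vertex is a sink -/
  sinkFirst : Prop

namespace Diagram

variable {Γ} (D : Γ.Diagram)

/-- The `k`-th marked vertex (counted from `0`), seen on the `A`-cycle on which the
diagram arrives at it. -/
def dart (k : Fin D.walk.darts.length) : Γ.Dart := D.walk.darts.get k

/-- The `k`-th marked vertex is a sink. -/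
def IsSink (k : Fin D.walk.darts.length) : Prop := Even (k : ℕ) ↔ D.sinkFirst

/-- `D.Piece a b`: the half-edges `a` and `b` at a common vertex `c` are a source and a sink that are
consecutive marked vertices of the diagram; they are joined by the directed subpath from `a`
to `b` on the `A`-cycle `c`. -/
def Piece (a b : Γ.Dart) : Prop :=
  ∃ k l : Fin D.walk.darts.length, ¬ D.IsSink k ∧ D.IsSink l ∧
    (((l : ℕ) = k + 1 ∧ a = (D.dart k).symm ∧ b = D.dart l) ∨
     ((k : ℕ) = l + 1 ∧ a = D.dart k ∧ b = (D.dart l).symm))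

/-- The quiver vertex `i` lies on the diagram: it is on one of the directed subpaths of the
diagram (end points included). -/
def OnDiagram (i : Γ.Edge) : Prop :=
  ∃ a b, D.Piece a b ∧ ∃ j ≤ Γ.dist a b, i = Γ.toEdge ((Γ.next)^[j] a)

variable (K : Type u) [Field K]

open scoped Classical in
/-- The component `A e_i → A e_j` of the differential between the `k`-th marked vertex `i` (a source)
and the `l`-th marked vertex `j` (a sink) is the multiplication by this element: by the
directed subpath from `i` to `j` if the two marked vertices are consecutive, by zero otherwise. -/
def coeff (k l : Fin D.walk.darts.length) : Γ.Alg K :=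
  if (l : ℕ) = k + 1 then Γ.path K (D.dart k).symm (D.dart l)
  else if (k : ℕ) = l + 1 then Γ.path K (D.dart k) (D.dart l).symm
  else 0

/-- The differential from the sum of the `A e_i` over all sources `i` to the sum of the `A e_j` over
all sinks `j`. -/
def differential :
    ((k : {k // ¬ D.IsSink k}) → Γ.Proj K (Γ.toEdge (D.dart k))) →ₗ[Γ.Alg K]
      ((l : {l // D.IsSink l}) → Γ.Proj K (Γ.toEdge (D.dart l))) :=
  letI : Fintype {k // ¬ D.IsSink k} := Fintype.ofFinite _
  LinearMap.pi fun l => ∑ k : {k // ¬ D.IsSink k},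
    (Γ.mulMap K (Γ.toEdge (D.dart k)) (Γ.toEdge (D.dart l)) (D.coeff K k l)).comp
      (LinearMap.proj k)

/-- The two-term complex with the given diagram: sources in degree `0`, sinks in degree `1`. -/
def complex : Γ.Cplx K :=
  HomologicalComplex.double (ModuleCat.ofHom (D.differential K))
    (show (ComplexShape.up ℤ).Rel 0 1 from rfl)

end Diagram

/-! ### Cyclic lexicographic order -/

/-- The complex `S` belongs to the sinks on the `A`-cycle `c`, and `L` is the ordered set of its marked
vertices: either `S` is the stalk complex in degree `1` of a projective module whose vertex lies on
`c`, and `L` consists of this vertex, or `S` has a diagram with a degree-one sink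
on `c` and no other vertex on `c`, and `L` lists the marked vertices starting from this sink.  (A
diagram may be traversed in both directions, so it is enough to look at the first marked vertex.)
Each marked vertex is recorded as a half-edge, on the `A`-cycle on which the diagram arrives
at it, which is `c` for the first one. -/
inductive IsSinkList {K : Type u} [Field K] (c : V) : Γ.Cplx K → List Γ.Dart → Prop
  | stalk (d : Γ.Dart) (h : d.fst = c) : IsSinkList c (stalk K 1 (Γ.toEdge d)) [d]
  | diagram (D : Γ.Diagram) (k : Fin D.walk.darts.length) (hk : (k : ℕ) = 0)
      (sink : D.IsSink k) (mem : c ∈ (D.dart k).edge)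
      (only : ∀ i : Γ.Edge, D.OnDiagram i → c ∈ i.1 → i = Γ.toEdge (D.dart k)) :
      IsSinkList c (D.complex K) D.walk.darts

/-- The linear order on the vertices of an `A`-cycle in which the vertex `g` is the greatest, the one
reached from `g` by an arrow is the next smaller one, and so on. -/
def CycleLt (g a b : Γ.Dart) : Prop := Γ.dist g b < Γ.dist g a

/-- Comparison of the ordered sets of marked vertices, from position `p` on, where `g` is set to be
the greatest vertex of the `A`-cycle containing the vertices at position `p`.  If these vertices
coincide, one goes on with position `p + 1`, where the common vertex is the greatest one on the
other `A`-cycle through it.  An empty spot is least at an odd, and greatest at an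
even position. -/
def LexLt : ℕ → Γ.Dart → List Γ.Dart → List Γ.Dart → Prop
  | _, _, [], [] => False
  | p, _, [], _ :: _ => Odd p
  | p, _, _ :: _, [] => Even p
  | p, g, a :: as, b :: bs => (a = b ∧ LexLt (p + 1) a.symm as bs) ∨ (a ≠ b ∧ Γ.CycleLt g a b)

end BrauerTree

/-- `b` follows `a` in the cyclic ordering glued from the linear order `lt`, where the cyclic
ordering runs from greater to smaller elements (as the arrows of an `A`-cycle do): `b` is the immediate
predecessor of `a`, or `a` is the least and `b` is the greatest element. -/
def GluedNext {α : Type w} (lt : α → α → Prop) (a b : α) : Prop :=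
  (lt b a ∧ ∀ x, ¬ (lt b x ∧ lt x a)) ∨ ((∀ x, ¬ lt x a) ∧ ∀ x, ¬ lt b x)

/-! ### The Brauer tree of the endomorphism algebra -/

namespace BrauerTree

variable {V : Type v} [Finite V] {Γ : BrauerTree V} {K : Type u} [Field K]

/-- An isomorphism of the Brauer tree algebra of `Δ` with the endomorphism algebra of `T`
in the homotopy category.  Products in `Δ.Alg K` are read from left to right and products in
`End` from right to left, so `ᵐᵒᵖ` makes an arrow from `x` to `y` correspond to a morphism from the
summand `x` to the summand `y`. -/
abbrev EndIso {W : Type w} [Finite W] (Δ : BrauerTree W) (T : Γ.Cplx K) :=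
  Δ.Alg K ≃ₐ[K] (End (Γ.toHo K T))ᵐᵒᵖ

/-- The complex `S` is the summand of `T` that corresponds to the edge `x` of the Brauer tree of the
endomorphism algebra of `T`: it is the image of the idempotent endomorphism given by `e_x`. -/
def IsSummandAt {W : Type w} [Finite W] {Δ : BrauerTree W} {T : Γ.Cplx K} (φ : EndIso Δ T)
    (x : Δ.Edge) (S : Γ.Cplx K) : Prop :=
  ∃ (i : Γ.toHo K S ⟶ Γ.toHo K T) (p : Γ.toHo K T ⟶ Γ.toHo K S),
    i ≫ p = 𝟙 _ ∧ p ≫ i = (φ (Δ.e K x)).unop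

/-- `L` is the ordered set of marked vertices of the summand of `T` at the edge `x`, and this summand
belongs to the sinks on the `A`-cycle `c`. -/
def IsSinkListAt {W : Type w} [Finite W] {Δ : BrauerTree W} {T : Γ.Cplx K} (φ : EndIso Δ T)
    (c : V) (x : Δ.Edge) (L : List Γ.Dart) : Prop :=
  ∃ S : Γ.Cplx K, IsSummandAt φ x S ∧ Γ.IsSinkList c S L

/-- The vertex `z` of the Brauer tree of the endomorphism algebra of `T` corresponds to the sinks on
the `A`-cycle `c`: the edges incident to `z` are exactly the summands of `T` that belong to the sinks
on `c`. -/
def IsSinkVertex {W : Type w} [Finite W] {Δ : BrauerTree W} {T : Γ.Cplx K} (φ : EndIso Δ T)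
    (c : V) (z : W) : Prop :=
  ∀ x : Δ.Edge, z ∈ x.1 ↔ ∃ L, IsSinkListAt φ c x L

end BrauerTree

end

/-!
Two morphisms between three indecomposable projectives at a common vertex of a Brauer tree can have
a non-zero composition only if the three edges are met in this order when one goes around that
vertex once. So it is enough to find, for summands `X > Y > Z` of `T` at `z` in the lexicographic
order, chain maps `X ⟶ Y ⟶ Z` whose composition is not null-homotopic: a linear order all of whose
decreasing triples are cyclically ordered determines the cyclic ordering.

The maps are the identity on the marked vertices that the two diagrams have in common at the
beginning, the directed subpath of an `A`-cycle at the first vertices where they differ, and zero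
from there on; the order is made so that they commute with the differentials. The component of the
composition at the degree-one sinks is a non-zero directed subpath of the `A`-cycle `c` (or an
idempotent), while every element that factors through the differential there is a multiple of a path
on the other `A`-cycle through the sink of `Z`. A uniserial module supported on `c` tells
the two apart.
-/

/-! ### The cyclic orderings around the vertices -/

namespace BrauerTree

instance {V : Type v} [Finite V] (G : SimpleGraph V) : Finite G.Dart :=
  Finite.of_injective _ SimpleGraph.Dart.toProd_injective

variable {V : Type v} [Finite V] {Γ : BrauerTree V}

/-- The length of the `A`-cycle `d.fst`, i.e. the number of half-edges at the vertex `d.fst`. -/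
noncomputable abbrev period (Γ : BrauerTree V) (d : Γ.Dart) : ℕ := Function.minimalPeriod Γ.next d

lemma mem_periodicPts (d : Γ.Dart) : d ∈ Function.periodicPts Γ.next :=
  Γ.next.injective.mem_periodicPts d

lemma period_pos (d : Γ.Dart) : 0 < Γ.period d :=
  Function.minimalPeriod_pos_of_mem_periodicPts (mem_periodicPts d)

lemma fst_iterate (k : ℕ) (d : Γ.Dart) : (Γ.next^[k] d).fst = d.fst := by
  induction k with
  | zero => rfl
  | succ k ih => rw [Function.iterate_succ_apply', Γ.fst_next, ih]

lemma exists_iterate_eq {a b : Γ.Dart} (h : a.fst = b.fst) :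
    ∃ k < Γ.period a, Γ.next^[k] a = b := by
  obtain ⟨k, hk⟩ := (Γ.sameCycle a b h).exists_nat_pow_eq
  refine ⟨k % Γ.period a, Nat.mod_lt _ (period_pos a), ?_⟩
  rw [Function.iterate_mod_minimalPeriod_eq, ← hk, Equiv.Perm.coe_pow]

lemma dist_eq_of_iterate {a b : Γ.Dart} {k : ℕ} (hk : k < Γ.period a) (h : Γ.next^[k] a = b) :
    Γ.dist a b = k := by
  have hmem : k ∈ {k : ℕ | Γ.next^[k] a = b} := h
  have hle : Γ.dist a b ≤ k := Nat.sInf_le hmem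
  have hdist : Γ.next^[Γ.dist a b] a = b := Nat.sInf_mem ⟨k, hmem⟩
  exact (Function.iterate_eq_iterate_iff_of_lt_minimalPeriod (hle.trans_lt hk) hk).1
    (hdist.trans h.symm)

@[simp] lemma dist_self (a : Γ.Dart) : Γ.dist a a = 0 := dist_eq_of_iterate (period_pos a) rfl

lemma iterate_dist {a b : Γ.Dart} (h : a.fst = b.fst) : Γ.next^[Γ.dist a b] a = b := by
  obtain ⟨k, hk, hkb⟩ := exists_iterate_eq h
  rw [dist_eq_of_iterate hk hkb, hkb]

lemma dist_lt_period {a b : Γ.Dart} (h : a.fst = b.fst) : Γ.dist a b < Γ.period a := by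
  obtain ⟨k, hk, hkb⟩ := exists_iterate_eq h
  rwa [dist_eq_of_iterate hk hkb]

lemma period_eq {a b : Γ.Dart} (h : a.fst = b.fst) : Γ.period a = Γ.period b := by
  rw [period, period, ← iterate_dist h, Function.minimalPeriod_apply_iterate (mem_periodicPts a)]

lemma dist_pos {a b : Γ.Dart} (h : a.fst = b.fst) (hne : a ≠ b) : 0 < Γ.dist a b :=
  Nat.pos_of_ne_zero fun h0 => hne (by simpa [h0] using iterate_dist h)

lemma eq_of_dist_eq {g a b : Γ.Dart} (ha : g.fst = a.fst) (hb : g.fst = b.fst)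
    (h : Γ.dist g a = Γ.dist g b) : a = b := by
  rw [← iterate_dist ha, h, iterate_dist hb]

lemma dist_add_dist {g a b : Γ.Dart} (ha : g.fst = a.fst) (hb : g.fst = b.fst)
    (h : Γ.dist g a ≤ Γ.dist g b) : Γ.dist g a + Γ.dist a b = Γ.dist g b := by
  have hlt := dist_lt_period hb
  rw [period_eq ha] at hlt
  have hab : Γ.dist a b = Γ.dist g b - Γ.dist g a := by
    refine dist_eq_of_iterate (by omega) ?_
    have hgb := iterate_dist hb
    rwa [← Nat.sub_add_cancel h, Function.iterate_add_apply, iterate_dist ha] at hgb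
  omega

lemma dist_add_dist_symm {a b : Γ.Dart} (h : a.fst = b.fst) (hne : a ≠ b) :
    Γ.dist a b + Γ.dist b a = Γ.period a := by
  have hlt := dist_lt_period h
  have hpos := dist_pos h hne
  have hba : Γ.dist b a = Γ.period a - Γ.dist a b := by
    refine dist_eq_of_iterate (by rw [← period_eq h]; omega) ?_
    have hper : Γ.next^[Γ.period a] a = a := Function.iterate_minimalPeriod
    rwa [← Nat.sub_add_cancel hlt.le, Function.iterate_add_apply, iterate_dist h] at hper
  omega

lemma dist_add_dist_back {g a b : Γ.Dart} (ha : g.fst = a.fst) (hb : g.fst = b.fst)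
    (hga : g ≠ a) (h : Γ.dist g a ≤ Γ.dist g b) : Γ.dist a b + Γ.dist b g = Γ.dist a g := by
  have hgb : g ≠ b := by
    rintro rfl
    exact (dist_pos ha hga).not_ge (h.trans_eq (dist_self g))
  have hab := dist_add_dist ha hb h
  have hgag := dist_add_dist_symm ha hga
  have hgbg := dist_add_dist_symm hb hgb
  omega

lemma dist_next {g a : Γ.Dart} (h : g.fst = a.fst) (hne : Γ.next a ≠ g) :
    Γ.dist g (Γ.next a) = Γ.dist g a + 1 := by
  have hit : Γ.next^[Γ.dist g a + 1] g = Γ.next a := by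
    rw [Function.iterate_succ_apply', iterate_dist h]
  refine dist_eq_of_iterate (lt_of_le_of_ne (dist_lt_period h) fun hper => hne ?_) hit
  rw [← hit, hper, Function.iterate_minimalPeriod]

lemma toEdge_symm (d : Γ.Dart) : Γ.toEdge d.symm = Γ.toEdge d :=
  Subtype.ext (SimpleGraph.Dart.edge_symm d)

lemma toEdge_eq_iff {a b : Γ.Dart} : Γ.toEdge a = Γ.toEdge b ↔ a = b ∨ a = b.symm := by
  rw [← SimpleGraph.dart_edge_eq_iff, toEdge, toEdge, Subtype.mk.injEq]

lemma eq_of_toEdge_eq {a b : Γ.Dart} (h : Γ.toEdge a = Γ.toEdge b) (hfst : a.fst = b.fst) :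
    a = b :=
  (toEdge_eq_iff.1 h).resolve_right (by rintro rfl; exact b.snd_ne_fst hfst)

/-- If two different edges meet in `a.fst`, they meet nowhere else. -/
lemma eq_and_eq_of_toEdge_eq {a b a' b' : Γ.Dart} (h : a.fst = b.fst) (hne : a ≠ b)
    (ha : Γ.toEdge a' = Γ.toEdge a) (hb : Γ.toEdge b' = Γ.toEdge b) (h' : a'.fst = b'.fst) :
    a' = a ∧ b' = b := by
  rcases toEdge_eq_iff.1 ha with rfl | rfl <;> rcases toEdge_eq_iff.1 hb with rfl | rfl
  · exact ⟨rfl, rfl⟩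
  · exact absurd (h'.symm.trans h) b.snd_ne_fst
  · exact absurd (h'.trans h.symm) a.snd_ne_fst
  · exact absurd (SimpleGraph.Dart.ext _ _ (Prod.ext h h')) hne

/-! ### Gluing a linear order to a cyclic ordering -/

lemma gluedNext_unique {α : Type*} {lt : α → α → Prop} [IsStrictTotalOrder α lt] {a b b' : α}
    (h : GluedNext lt a b) (h' : GluedNext lt a b') : b = b' := by
  have not_lt : ∀ {b b'}, GluedNext lt a b → GluedNext lt a b' → ¬ lt b b' := by
    rintro b b' (⟨hba, hb⟩ | ⟨-, hb⟩) h' hlt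
    · rcases h' with ⟨hb'a, -⟩ | ⟨hleast, -⟩
      · exact hb b' ⟨hlt, hb'a⟩
      · exact hleast b hba
    · exact hb b' hlt
  rcases trichotomous_of lt b b' with hlt | heq | hlt
  · exact absurd hlt (not_lt h h')
  · exact heq
  · exact absurd hlt (not_lt h' h)

lemma gluedNext_cycleLt {z : V} (m a b : {d : Γ.Dart // d.fst = z}) (hab : Γ.next a.1 = b.1) :
    GluedNext (fun x y : {d : Γ.Dart // d.fst = z} => Γ.CycleLt m.1 x.1 y.1) a b := by
  have hfst : ∀ x y : {d : Γ.Dart // d.fst = z}, x.1.fst = y.1.fst := fun x y => x.2.trans y.2.symm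
  simp only [GluedNext, CycleLt, ← hab]
  by_cases hm : Γ.next a.1 = m.1
  · have hper : Γ.period m.1 ≤ Γ.dist m.1 a.1 + 1 := by
      refine Function.IsPeriodicPt.minimalPeriod_le (Nat.succ_pos _) ?_
      rw [Function.IsPeriodicPt, Function.IsFixedPt, Function.iterate_succ_apply',
        iterate_dist (hfst m a), hm]
    refine .inr ⟨fun x => ?_, fun x => by simp [hm]⟩
    have := dist_lt_period (hfst m x)
    omega
  · rw [dist_next (hfst m a) hm]
    exact .inl ⟨by omega, fun x => by omega⟩

/-- The bound says that, going once around `z` from `a`, one meets `b` before `d`. -/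
lemma lt_iff_cycleLt_of_dist_add_dist_le {z : V}
    {lt : {d : Γ.Dart // d.fst = z} → {d : Γ.Dart // d.fst = z} → Prop} [IsStrictTotalOrder _ lt]
    (hlt : ∀ a b d, lt b a → lt d b → Γ.dist a.1 b.1 + Γ.dist b.1 d.1 ≤ Γ.period a.1)
    {m : {d : Γ.Dart // d.fst = z}} (hm : ∀ x, ¬ lt m x) (a b : {d : Γ.Dart // d.fst = z}) :
    lt a b ↔ Γ.CycleLt m.1 a.1 b.1 := by
  have hfst : ∀ x y : {d : Γ.Dart // d.fst = z}, x.1.fst = y.1.fst := fun x y => x.2.trans y.2.symm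
  have hne : ∀ {x y}, lt x y → x.1 ≠ y.1 := fun h heq => irrefl_of lt _ (Subtype.ext heq ▸ h)
  have cycleLt_of_lt : ∀ {a b}, lt a b → Γ.CycleLt m.1 a.1 b.1 := by
    intro a b hab
    have hma : m.1 ≠ a.1 := fun heq => hm b (Subtype.ext heq ▸ hab)
    have hpos := dist_pos (hfst m a) hma
    rcases trichotomous_of lt b m with hbm | rfl | hmb
    · by_contra hle
      have htriple := hlt m b a hbm hab
      have hmab := dist_add_dist (hfst m a) (hfst m b) (not_lt.1 hle)
      have hper := dist_add_dist_symm (hfst a b) (hne hab)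
      rw [period_eq (hfst a m)] at hper
      omega
    · simpa [CycleLt] using hpos
    · exact absurd hmb (hm b)
  refine ⟨cycleLt_of_lt, fun h => ?_⟩
  rcases trichotomous_of lt a b with hab | rfl | hba
  · exact hab
  · exact absurd h (lt_irrefl _)
  · exact absurd (cycleLt_of_lt hba) h.not_gt

theorem next_eq_iff_gluedNext {z : V}
    {lt : {d : Γ.Dart // d.fst = z} → {d : Γ.Dart // d.fst = z} → Prop} [IsStrictTotalOrder _ lt]
    (hlt : ∀ a b d, lt b a → lt d b → Γ.dist a.1 b.1 + Γ.dist b.1 d.1 ≤ Γ.period a.1)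
    (a b : {d : Γ.Dart // d.fst = z}) : Γ.next a.1 = b.1 ↔ GluedNext lt a b := by
  obtain ⟨m, -, hm⟩ :=
    (Finite.wellFounded_of_trans_of_irrefl (Function.swap lt)).has_min Set.univ ⟨a, trivial⟩
  have hlt_eq : lt = fun x y => Γ.CycleLt m.1 x.1 y.1 := by
    ext x y
    exact lt_iff_cycleLt_of_dist_add_dist_le hlt (fun x => hm x trivial) x y
  have glued : ∀ {b}, Γ.next a.1 = b.1 → GluedNext lt a b := fun hab =>
    hlt_eq ▸ gluedNext_cycleLt m a _ hab
  refine ⟨glued, fun h => ?_⟩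
  exact congrArg Subtype.val (gluedNext_unique
    (glued (b := ⟨Γ.next a.1, (Γ.fst_next a.1).trans a.2⟩) rfl) h)

end BrauerTree

/-! ### Paths in the Brauer tree algebra -/

lemma span_eq_top_of_mul_mem {R A : Type*} [CommSemiring R] [Semiring A] [Algebra R A]
    {S G : Set A} (hG : Algebra.adjoin R G = ⊤) (one_mem : 1 ∈ Submodule.span R S)
    (mul_mem : ∀ s ∈ S, ∀ x ∈ G, s * x ∈ Submodule.span R S) : Submodule.span R S = ⊤ := by
  have stable : ∀ y : A, ∀ s ∈ Submodule.span R S, s * y ∈ Submodule.span R S := by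
    intro y
    induction (hG ▸ Algebra.mem_top : y ∈ Algebra.adjoin R G) using Algebra.adjoin_induction with
    | mem x hx =>
      have hle : Submodule.span R S ≤ (Submodule.span R S).comap (LinearMap.mulRight R x) :=
        Submodule.span_le.2 fun s hs => mul_mem s hs x hx
      exact fun s hs => hle hs
    | algebraMap r =>
      intro s hs
      rw [← Algebra.commutes, ← Algebra.smul_def]
      exact Submodule.smul_mem _ _ hs
    | add x y _ _ hx hy => exact fun s hs => mul_add s x y ▸ add_mem (hx s hs) (hy s hs)
    | mul x y _ _ hx hy => exact fun s hs => mul_assoc s x y ▸ hy _ (hx s hs)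
  exact Submodule.eq_top_iff'.2 fun y => one_mul y ▸ stable y 1 one_mem

open Classical in
/-- The projection of the functions on `X` to those supported on the fiber of `p` over `i`. -/
noncomputable def fiberProj (R : Type*) [CommSemiring R] {X I : Type*} (p : X → I) (i : I) :
    Module.End R (X → R) :=
  LinearMap.pi fun x => if p x = i then LinearMap.proj x else 0

lemma fiberProj_apply {R : Type*} [CommSemiring R] {X I : Type*} [DecidableEq I] (p : X → I)
    (i : I) (v : X → R) (x : X) : fiberProj R p i v x = if p x = i then v x else 0 := by
  by_cases h : p x = i <;> simp [fiberProj, h]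

lemma completeOrthogonalIdempotents_fiberProj (R : Type*) [CommSemiring R] {X I : Type*} [Fintype I]
    (p : X → I) : CompleteOrthogonalIdempotents (fiberProj R p) := by
  classical
  refine ⟨⟨fun i => ?_, fun i j hij => ?_⟩, ?_⟩ <;>
    refine LinearMap.ext fun v => funext fun x => ?_
  · simp only [Module.End.mul_apply, fiberProj_apply]
    split_ifs <;> rfl
  · simp only [Module.End.mul_apply, fiberProj_apply, LinearMap.zero_apply, Pi.zero_apply]
    grind
  · simp [LinearMap.sum_apply, fiberProj_apply]

namespace BrauerTree

section Paths

variable {V : Type v} [Finite V] {Γ : BrauerTree V} (K : Type u) [Field K]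

lemma exists_toEdge_eq (i : Γ.Edge) : ∃ d : Γ.Dart, Γ.toEdge d = i := by
  obtain ⟨⟨a, b⟩, h⟩ := i
  exact ⟨⟨(a, b), h⟩, rfl⟩

lemma quot_eq_of_rel {x y : FreeAlgebra K Γ.Gen} (h : Γ.Rel K x y) : Γ.quot K x = Γ.quot K y :=
  RingQuot.mkAlgHom_rel K h

lemma completeOrthogonalIdempotents_e : CompleteOrthogonalIdempotents (Γ.e K) where
  idem i := by simpa using! quot_eq_of_rel K (Rel.idem_mul_self i)
  ortho i j h := by simpa using! quot_eq_of_rel K (Rel.idem_mul_idem i j h)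
  complete := by simpa using! quot_eq_of_rel K (Rel.sum_idem (Γ := Γ))

lemma e_mul_self (i : Γ.Edge) : Γ.e K i * Γ.e K i = Γ.e K i :=
  (completeOrthogonalIdempotents_e K).idem i

lemma e_mul_e_of_ne {i j : Γ.Edge} (h : i ≠ j) : Γ.e K i * Γ.e K j = 0 :=
  (completeOrthogonalIdempotents_e K).ortho h

/-- The arrow from `d.edge` to `(Γ.next d).edge` on the `A`-cycle `d.fst`, as an element of the
Brauer tree algebra. -/
noncomputable def arrow (d : Γ.Dart) : Γ.Alg K := Γ.quot K (Γ.freeArrow K d)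

lemma e_mul_arrow (d : Γ.Dart) : Γ.e K (Γ.toEdge d) * arrow K d = arrow K d := by
  simpa using! quot_eq_of_rel K (Rel.idem_mul_arrow d)

lemma arrow_mul_e (d : Γ.Dart) : arrow K d * Γ.e K (Γ.toEdge (Γ.next d)) = arrow K d := by
  simpa using! quot_eq_of_rel K (Rel.arrow_mul_idem d)

lemma arrow_mul_arrow_symm (d : Γ.Dart) : arrow K d * arrow K (Γ.next d).symm = 0 := by
  simpa using! quot_eq_of_rel K (Rel.arrow_mul_arrow d)

/-- The path of `k` consecutive arrows of the `A`-cycle `d.fst` that starts in `d.edge`, as an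
element of the Brauer tree algebra.  Unlike for `freePath`, the path with no arrows is the
idempotent of its starting point. -/
noncomputable def cyclePath (d : Γ.Dart) (k : ℕ) : Γ.Alg K :=
  Γ.e K (Γ.toEdge d) * Γ.quot K (Γ.freePath K d k)

lemma cyclePath_zero (d : Γ.Dart) : cyclePath K d 0 = Γ.e K (Γ.toEdge d) := by
  simp [cyclePath, freePath]

lemma cyclePath_succ (d : Γ.Dart) (k : ℕ) :
    cyclePath K d (k + 1) = cyclePath K d k * arrow K (Γ.next^[k] d) := by
  simp [cyclePath, freePath, arrow, List.range_succ, mul_assoc]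

lemma cyclePath_one (d : Γ.Dart) : cyclePath K d 1 = arrow K d := by
  rw [cyclePath_succ, cyclePath_zero, Function.iterate_zero_apply, e_mul_arrow]

lemma e_mul_cyclePath (d : Γ.Dart) (k : ℕ) :
    Γ.e K (Γ.toEdge d) * cyclePath K d k = cyclePath K d k := by
  rw [cyclePath, ← mul_assoc, e_mul_self]

lemma cyclePath_mul_e (d : Γ.Dart) (k : ℕ) :
    cyclePath K d k * Γ.e K (Γ.toEdge (Γ.next^[k] d)) = cyclePath K d k := by
  cases k with
  | zero => rw [cyclePath_zero, Function.iterate_zero_apply, e_mul_self]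
  | succ k => rw [cyclePath_succ, mul_assoc, Function.iterate_succ_apply', arrow_mul_e]

lemma cyclePath_mul_e_of_ne (d : Γ.Dart) (k : ℕ) {i : Γ.Edge} (h : Γ.toEdge (Γ.next^[k] d) ≠ i) :
    cyclePath K d k * Γ.e K i = 0 := by
  rw [← cyclePath_mul_e, mul_assoc, e_mul_e_of_ne K h, mul_zero]

lemma cyclePath_add (d : Γ.Dart) (k l : ℕ) :
    cyclePath K d (k + l) = cyclePath K d k * cyclePath K (Γ.next^[k] d) l := by
  induction l with
  | zero => rw [cyclePath_zero, cyclePath_mul_e, add_zero]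
  | succ l ih =>
    rw [← add_assoc, cyclePath_succ, ih, cyclePath_succ, mul_assoc, ← Function.iterate_add_apply,
      add_comm l]

lemma cyclePath_mul_cyclePath_symm (d : Γ.Dart) {k l : ℕ} (hk : 0 < k) (hl : 0 < l) :
    cyclePath K d k * cyclePath K (Γ.next^[k] d).symm l = 0 := by
  obtain ⟨k, rfl⟩ := Nat.exists_eq_succ_of_ne_zero hk.ne'
  obtain ⟨l, rfl⟩ := Nat.exists_eq_add_of_lt hl
  rw [cyclePath_succ, Function.iterate_succ_apply', zero_add, add_comm l, cyclePath_add,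
    cyclePath_one, mul_assoc, ← mul_assoc (arrow K _), arrow_mul_arrow_symm, zero_mul, mul_zero]

lemma cyclePath_period (d : Γ.Dart) :
    cyclePath K d (Γ.period d) = cyclePath K d.symm (Γ.period d.symm) := by
  rw [cyclePath, cyclePath, toEdge_symm, quot_eq_of_rel K (Rel.cycle_eq d)]

lemma cyclePath_eq_zero_of_period_lt (d : Γ.Dart) {k : ℕ} (hk : Γ.period d < k) :
    cyclePath K d k = 0 := by
  obtain ⟨l, rfl⟩ := Nat.exists_eq_add_of_lt hk
  have h := cyclePath_mul_cyclePath_symm K d.symm (period_pos d.symm) l.succ_pos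
  rw [Function.iterate_minimalPeriod, SimpleGraph.Dart.symm_symm] at h
  rw [add_assoc, cyclePath_add, Function.iterate_minimalPeriod, cyclePath_period, h]

variable (Γ) in
lemma adjoin_e_arrow :
    Algebra.adjoin K (Set.range (Γ.e K) ∪ Set.range (arrow K)) = (⊤ : Subalgebra K (Γ.Alg K)) := by
  have hsurj : Function.Surjective (Γ.quot K) := RingQuot.mkAlgHom_surjective K _
  rw [← (AlgHom.range_eq_top _).2 hsurj, ← Algebra.map_top, ← FreeAlgebra.adjoin_range_ι,
    AlgHom.map_adjoin]
  congr 1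
  ext x
  constructor
  · rintro (⟨i, rfl⟩ | ⟨d, rfl⟩)
    exacts [⟨_, ⟨.idem i, rfl⟩, rfl⟩, ⟨_, ⟨.arrow d, rfl⟩, rfl⟩]
  · rintro ⟨_, ⟨i | d, rfl⟩, rfl⟩
    exacts [.inl ⟨i, rfl⟩, .inr ⟨d, rfl⟩]

lemma cyclePath_mul_arrow_mem_span (d d' : Γ.Dart) (k : ℕ) :
    cyclePath K d k * arrow K d' ∈ Submodule.span K (Set.range (cyclePath K (Γ := Γ)).uncurry) := by
  by_cases h : Γ.toEdge (Γ.next^[k] d) = Γ.toEdge d'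
  · rcases toEdge_eq_iff.1 h.symm with rfl | rfl
    · exact Submodule.subset_span ⟨(d, k + 1), cyclePath_succ K d k⟩
    · rw [← cyclePath_one]
      rcases k.eq_zero_or_pos with rfl | hk
      · rw [cyclePath_zero, ← toEdge_symm, Function.iterate_zero_apply, e_mul_cyclePath]
        exact Submodule.subset_span ⟨(d.symm, 1), rfl⟩
      · rw [cyclePath_mul_cyclePath_symm K d hk one_pos]
        exact zero_mem _
  · rw [← e_mul_arrow, ← mul_assoc, cyclePath_mul_e_of_ne K d k h, zero_mul]
    exact zero_mem _

lemma span_cyclePath :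
    Submodule.span K (Set.range (cyclePath K (Γ := Γ)).uncurry) = ⊤ := by
  have e_mem : ∀ i, Γ.e K i ∈ Submodule.span K (Set.range (cyclePath K (Γ := Γ)).uncurry) := by
    intro i
    obtain ⟨d, rfl⟩ := exists_toEdge_eq i
    exact Submodule.subset_span ⟨(d, 0), cyclePath_zero K d⟩
  refine span_eq_top_of_mul_mem (adjoin_e_arrow Γ K) ?_ ?_
  · rw [← (completeOrthogonalIdempotents_e K).complete]
    exact Submodule.sum_mem _ fun i _ => e_mem i
  · rintro _ ⟨⟨d, k⟩, rfl⟩ _ (⟨i, rfl⟩ | ⟨d', rfl⟩)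
    · by_cases h : Γ.toEdge (Γ.next^[k] d) = i
      · rw [← h]
        exact Submodule.subset_span ⟨(d, k), (cyclePath_mul_e K d k).symm⟩
      · rw [Function.uncurry_apply_pair, cyclePath_mul_e_of_ne K d k h]
        exact zero_mem _
    · exact cyclePath_mul_arrow_mem_span K d d' k

/-- The shortest path from `a.edge` to `b.edge` on the `A`-cycle `a.fst`, for two half-edges `a`,
`b` at the same vertex.  For `a = b` this is the idempotent of `a.edge`; otherwise it is `path`. -/
noncomputable def arc (a b : Γ.Dart) : Γ.Alg K := cyclePath K a (Γ.dist a b)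

lemma arc_self (a : Γ.Dart) : arc K a a = Γ.e K (Γ.toEdge a) := by
  rw [arc, dist_self, cyclePath_zero]

lemma e_mul_arc (a b : Γ.Dart) : Γ.e K (Γ.toEdge a) * arc K a b = arc K a b :=
  e_mul_cyclePath ..

variable {a b d : Γ.Dart}

lemma arc_mul_e (hab : a.fst = b.fst) : arc K a b * Γ.e K (Γ.toEdge b) = arc K a b := by
  simpa [arc, iterate_dist hab] using cyclePath_mul_e K a (Γ.dist a b)

lemma arc_mul_arc (hab : a.fst = b.fst) (h : Γ.dist a b + Γ.dist b d = Γ.dist a d) :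
    arc K a b * arc K b d = arc K a d := by
  simp only [arc, ← h, cyclePath_add, iterate_dist hab]

lemma arc_mul_arc_eq_zero (hab : a.fst = b.fst) (h : Γ.period a < Γ.dist a b + Γ.dist b d) :
    arc K a b * arc K b d = 0 := by
  simpa [arc, cyclePath_add, iterate_dist hab] using cyclePath_eq_zero_of_period_lt K a h

lemma arc_mul_arc_symm (hab : a.fst = b.fst) (hne : a ≠ b) (hbd : b.symm.fst = d.fst)
    (hne' : b.symm ≠ d) : arc K a b * arc K b.symm d = 0 := by
  simpa [arc, iterate_dist hab] using
    cyclePath_mul_cyclePath_symm K a (dist_pos hab hne) (dist_pos hbd hne')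

lemma e_mul_mul_e_mem_span_arc (hab : a.fst = b.fst) (hne : a ≠ b) (x : Γ.Alg K) :
    Γ.e K (Γ.toEdge a) * x * Γ.e K (Γ.toEdge b) ∈ Submodule.span K {arc K a b} := by
  have hx : x ∈ Submodule.span K (Set.range (cyclePath K (Γ := Γ)).uncurry) :=
    (span_cyclePath K (Γ := Γ)).symm ▸ Submodule.mem_top
  induction hx using Submodule.span_induction with
  | zero => simp
  | add x y _ _ hx hy => rw [mul_add, add_mul]; exact add_mem hx hy
  | smul r x _ hx => rw [mul_smul_comm, smul_mul_assoc]; exact Submodule.smul_mem _ _ hx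
  | mem x hx =>
    obtain ⟨⟨d, k⟩, rfl⟩ := hx
    rw [Function.uncurry_apply_pair]
    by_cases hb : Γ.toEdge (Γ.next^[k] d) = Γ.toEdge b
    · by_cases ha : Γ.toEdge d = Γ.toEdge a
      · obtain ⟨rfl, hkb⟩ := eq_and_eq_of_toEdge_eq hab hne ha hb (fst_iterate k d).symm
        rw [← hb, e_mul_cyclePath, cyclePath_mul_e]
        rcases lt_trichotomy k (Γ.period d) with hlt | rfl | hlt
        · rw [arc, dist_eq_of_iterate hlt hkb]
          exact Submodule.mem_span_singleton_self _
        · exact absurd (Function.iterate_minimalPeriod.symm.trans hkb) hne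
        · rw [cyclePath_eq_zero_of_period_lt K d hlt]
          exact zero_mem _
      · rw [← e_mul_cyclePath, ← mul_assoc, e_mul_e_of_ne K (Ne.symm ha), zero_mul, zero_mul]
        exact zero_mem _
    · rw [mul_assoc, cyclePath_mul_e_of_ne K d k hb, mul_zero]
      exact zero_mem _

lemma dist_add_dist_le_of_mul_ne_zero (hab : a.fst = b.fst) (hbd : b.fst = d.fst) {x y : Γ.Alg K}
    (hx : Γ.e K (Γ.toEdge a) * x * Γ.e K (Γ.toEdge b) = x)
    (hy : Γ.e K (Γ.toEdge b) * y * Γ.e K (Γ.toEdge d) = y) (hxy : x * y ≠ 0) :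
    Γ.dist a b + Γ.dist b d ≤ Γ.period a := by
  rcases eq_or_ne a b with rfl | hne
  · simpa [dist_self] using (dist_lt_period hbd).le
  rcases eq_or_ne b d with rfl | hne'
  · simpa [dist_self] using (dist_lt_period hab).le
  obtain ⟨r, hr⟩ := Submodule.mem_span_singleton.1 (e_mul_mul_e_mem_span_arc K hab hne x)
  obtain ⟨s, hs⟩ := Submodule.mem_span_singleton.1 (e_mul_mul_e_mem_span_arc K hbd hne' y)
  by_contra! hlt
  rw [← hx, ← hy, ← hr, ← hs, smul_mul_smul_comm, arc_mul_arc_eq_zero K hab hlt, smul_zero] at hxy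
  exact hxy rfl

end Paths

/-! ### Representations of the Brauer tree algebra -/

section Representations

variable {V : Type v} [Finite V] {Γ : BrauerTree V} {K : Type u} [Field K]

/-- Both sides of the relations `Rel.cycle_eq` are sent to zero here. -/
theorem exists_algHom_of_arrow_eq_zero {B : Type*} [Ring B] [Algebra K B] {E : Γ.Edge → B}
    {α : Γ.Dart → B} (hE : CompleteOrthogonalIdempotents E)
    (hEα : ∀ d, E (Γ.toEdge d) * α d = α d) (hαE : ∀ d, α d * E (Γ.toEdge (Γ.next d)) = α d)
    (hαα : ∀ d, α d * α (Γ.next d).symm = 0)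
    (hcycle : ∀ d, ∃ k < Γ.period d, α (Γ.next^[k] d) = 0) :
    ∃ f : Γ.Alg K →ₐ[K] B, (∀ i, f (Γ.e K i) = E i) ∧ ∀ d, f (arrow K d) = α d := by
  let F : FreeAlgebra K Γ.Gen →ₐ[K] B := FreeAlgebra.lift K fun
    | .idem i => E i
    | .arrow d => α d
  have F_cycle : ∀ d, F (Γ.freePath K d (Γ.period d)) = 0 := by
    intro d
    obtain ⟨k, hk, h0⟩ := hcycle d
    rw [freePath, map_list_prod, List.map_map]
    exact List.prod_eq_zero (List.mem_map.2 ⟨k, List.mem_range.2 hk, by simpa [F] using h0⟩)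
  have F_rel : ∀ ⦃x y⦄, Γ.Rel K x y → F x = F y := by
    intro x y h
    cases h with
    | idem_mul_self i => simpa [F] using (hE.idem i).eq
    | idem_mul_idem i j h => simpa [F] using hE.ortho h
    | sum_idem => simpa [F] using hE.complete
    | idem_mul_arrow d => simpa [F] using hEα d
    | arrow_mul_idem d => simpa [F] using hαE d
    | arrow_mul_arrow d => simpa [F] using hαα d
    | cycle_eq d => rw [F_cycle, F_cycle]
  exact ⟨RingQuot.liftAlgHom K ⟨F, F_rel⟩,
    fun i => (RingQuot.liftAlgHom_mkAlgHom_apply ..).trans (by simp [F]),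
    fun d => (RingQuot.liftAlgHom_mkAlgHom_apply ..).trans (by simp [F])⟩

lemma eq_of_mul_eq_e {i j : Γ.Edge} {x y : Γ.Alg K} (hxy : x * y = Γ.e K i)
    (hyx : y * x = Γ.e K j) : i = j := by
  classical
  obtain ⟨f, hf, -⟩ := exists_algHom_of_arrow_eq_zero (Γ := Γ) (K := K) (B := Γ.Edge → K)
    (α := fun _ => 0) (CompleteOrthogonalIdempotents.single fun _ => K) (by simp) (by simp)
    (by simp) fun d => ⟨0, period_pos d, rfl⟩
  have hij : (Pi.single i 1 : Γ.Edge → K) = Pi.single j 1 := by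
    rw [← hf, ← hf, ← hxy, ← hyx, map_mul, map_mul, mul_comm]
  by_contra hne
  simpa [hne] using congrFun hij i

open Classical in
/-- A uniserial module with socle `a.edge` and one composition factor for each half-edge at `a.fst`;
the functions supported on the half-edges at other vertices form a semisimple direct summand. -/
lemma exists_uniserial_algHom (a : Γ.Dart) :
    ∃ f : Γ.Alg K →ₐ[K] Module.End K (Γ.Dart → K),
      (∀ i v d, f (Γ.e K i) v d = if Γ.toEdge d = i then v d else 0) ∧
      ∀ d v, f (arrow K d) v =
        if d.fst = a.fst ∧ Γ.next d ≠ a then Pi.single d (v (Γ.next d)) else 0 := by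
  let α (d : Γ.Dart) : Module.End K (Γ.Dart → K) :=
    if d.fst = a.fst ∧ Γ.next d ≠ a then
      (LinearMap.single K _ d).comp (LinearMap.proj (Γ.next d)) else 0
  have α_apply : ∀ d v, α d v =
      if d.fst = a.fst ∧ Γ.next d ≠ a then Pi.single d (v (Γ.next d)) else 0 := by
    intro d v
    simp only [α]
    split_ifs <;> rfl
  have proj_mul_α : ∀ d, fiberProj K Γ.toEdge (Γ.toEdge d) * α d = α d := by
    refine fun d => LinearMap.ext fun v => funext fun x => ?_
    by_cases hx : x = d
    · simp [fiberProj_apply, hx]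
    · simp only [Module.End.mul_apply, fiberProj_apply, α_apply]
      split_ifs <;> simp [hx]
  have α_mul_proj : ∀ d, α d * fiberProj K Γ.toEdge (Γ.toEdge (Γ.next d)) = α d :=
    fun d => LinearMap.ext fun v => by simp [fiberProj_apply, α_apply]
  have α_mul_α_symm : ∀ d, α d * α (Γ.next d).symm = 0 := by
    intro d
    have hfst : (Γ.next d).symm.fst ≠ d.fst := (Γ.next d).snd_ne_fst.trans_eq (Γ.fst_next d)
    by_cases hd : d.fst = a.fst
    · rw [show α (Γ.next d).symm = 0 from if_neg fun h => hfst (h.1.trans hd.symm), mul_zero]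
    · rw [show α d = 0 from if_neg fun h => hd h.1, zero_mul]
  have α_eq_zero : ∀ d, ∃ k < Γ.period d, α (Γ.next^[k] d) = 0 := by
    intro d
    by_cases hd : d.fst = a.fst
    · obtain ⟨k, hk, hka⟩ := exists_iterate_eq (b := Γ.next.symm a)
        (hd.trans (by rw [← Γ.fst_next (Γ.next.symm a), Equiv.apply_symm_apply]))
      exact ⟨k, hk, if_neg (by simp [hka])⟩
    · exact ⟨0, period_pos d, if_neg fun h => hd h.1⟩
  obtain ⟨f, hf_e, hf_arrow⟩ := exists_algHom_of_arrow_eq_zero (K := K)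
    (completeOrthogonalIdempotents_fiberProj K Γ.toEdge) proj_mul_α α_mul_proj α_mul_α_symm
    α_eq_zero
  exact ⟨f, fun i => hf_e i ▸ fiberProj_apply Γ.toEdge i, fun d => hf_arrow d ▸ α_apply d⟩

lemma exists_linearMap_arc (a : Γ.Dart) : ∃ f : Γ.Alg K →ₗ[K] K,
    (∀ b, a.fst = b.fst → f (arc K a b) = 1) ∧
    ∀ (c d : Γ.Dart) (x : Γ.Alg K),
      c.fst = d.fst → c ≠ d → c.fst ≠ a.fst → f (x * arc K c d) = 0 := by
  classical
  obtain ⟨f, hf_e, hf_arrow⟩ := exists_uniserial_algHom (K := K) a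
  have hf_cyclePath : ∀ k < Γ.period a, ∀ v, f (cyclePath K a k) v a = v (Γ.next^[k] a) := by
    intro k hk
    induction k with
    | zero => simp [cyclePath_zero, hf_e]
    | succ k ih =>
      intro v
      have hnext : Γ.next (Γ.next^[k] a) ≠ a := by
        rw [← Function.iterate_succ_apply' Γ.next]
        exact fun h => Function.not_isPeriodicPt_of_pos_of_lt_minimalPeriod k.succ_ne_zero hk h
      rw [cyclePath_succ, map_mul, Module.End.mul_apply, ih (by omega), hf_arrow, fst_iterate,
        if_pos ⟨rfl, hnext⟩, Pi.single_eq_same, ← Function.iterate_succ_apply' Γ.next]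
  refine ⟨LinearMap.proj a ∘ₗ LinearMap.applyₗ 1 ∘ₗ f.toLinearMap, fun b hab => ?_,
    fun c d x hcd hne hca => ?_⟩
  · exact hf_cyclePath _ (dist_lt_period hab) 1
  · have hf_arc : f (arc K c d) 1 = 0 := by
      obtain ⟨k, hk⟩ := Nat.exists_eq_succ_of_ne_zero (dist_pos hcd hne).ne'
      rw [arc, hk, cyclePath_succ, map_mul, Module.End.mul_apply, hf_arrow, fst_iterate,
        if_neg fun h => hca h.1, map_zero]
    simp [hf_arc]

end Representations

end BrauerTree

/-! ### Complexes in two degrees -/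

section Double

open HomologicalComplex

variable {C : Type*} [Category* C] [HasZeroMorphisms C] [HasZeroObject C] {ι : Type*}
  {c : ComplexShape ι} {i₀ i₁ : ι} {hi : c.Rel i₀ i₁} {X₀ X₁ Y₀ Y₁ : C}

/-- The morphism of complexes in the degrees `i₀` and `i₁` given by a commutative square. -/
noncomputable def doubleMap {f : X₀ ⟶ X₁} {g : Y₀ ⟶ Y₁} (h : i₀ ≠ i₁) (φ₀ : X₀ ⟶ Y₀) (φ₁ : X₁ ⟶ Y₁)
    (comm : φ₀ ≫ g = f ≫ φ₁) : double f hi ⟶ double g hi :=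
  mkHomFromDouble hi h (φ₀ ≫ (doubleXIso₀ g hi).inv) (φ₁ ≫ (doubleXIso₁ g hi h).inv)
    (by simp [double_d _ _ h, reassoc_of% comm])
    (fun k _ => by rw [double_d_eq_zero₀ _ _ _ _ h.symm, comp_zero])

lemma doubleMap_f₁ {f : X₀ ⟶ X₁} {g : Y₀ ⟶ Y₁} (h : i₀ ≠ i₁) (φ₀ : X₀ ⟶ Y₀) (φ₁ : X₁ ⟶ Y₁)
    (comm : φ₀ ≫ g = f ≫ φ₁) :
    (doubleMap (hi := hi) h φ₀ φ₁ comm).f i₁ =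
      (doubleXIso₁ f hi h).hom ≫ φ₁ ≫ (doubleXIso₁ g hi h).inv :=
  mkHomFromDouble_f₁ ..

lemma doubleMap_comp {Z₀ Z₁ : C} {f : X₀ ⟶ X₁} {g : Y₀ ⟶ Y₁} {k : Z₀ ⟶ Z₁} (h : i₀ ≠ i₁)
    {φ₀ : X₀ ⟶ Y₀} {φ₁ : X₁ ⟶ Y₁} (hφ : φ₀ ≫ g = f ≫ φ₁) {ψ₀ : Y₀ ⟶ Z₀} {ψ₁ : Y₁ ⟶ Z₁}
    (hψ : ψ₀ ≫ k = g ≫ ψ₁) :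
    doubleMap (hi := hi) h φ₀ φ₁ hφ ≫ doubleMap h ψ₀ ψ₁ hψ =
      doubleMap h (φ₀ ≫ ψ₀) (φ₁ ≫ ψ₁) (by rw [Category.assoc, hψ, reassoc_of% hφ]) :=
  from_double_hom_ext (by simp [doubleMap]) (by simp [doubleMap])

/-- A complex in the degrees `i₀` and `i₁` whose component in degree `i₀` is zero is a stalk
complex. -/
noncomputable def singleIsoDouble [DecidableEq ι] {Y : C} (f : X₀ ⟶ X₁) (hi : c.Rel i₀ i₁)
    (h : i₀ ≠ i₁) (h₀ : IsZero X₀) (e : Y ≅ X₁) : (single C c i₁).obj Y ≅ double f hi where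
  hom := mkHomFromSingle (e.hom ≫ (doubleXIso₁ f hi h).inv)
    (fun k _ => by rw [double_d_eq_zero₀ _ _ _ _ h.symm, comp_zero])
  inv := mkHomFromDouble hi h 0 (e.inv ≫ (singleObjXSelf c i₁ Y).inv) (h₀.eq_of_src _ _)
    (fun k _ => by simp)
  hom_inv_id := from_single_hom_ext (by simp)
  inv_hom_id := from_double_hom_ext ((h₀.of_iso (doubleXIso₀ f hi)).eq_of_src _ _) (by simp)

lemma exists_eq_comp_of_quotient_map_doubleMap_eq_zero {C : Type*} [Category* C] [Preadditive C]
    [HasZeroObject C] {X₀ X₁ Y₀ Y₁ : C} {f : X₀ ⟶ X₁} {g : Y₀ ⟶ Y₁} (h : i₀ ≠ i₁) {φ₀ : X₀ ⟶ Y₀}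
    {φ₁ : X₁ ⟶ Y₁} {comm : φ₀ ≫ g = f ≫ φ₁}
    (hφ : (HomotopyCategory.quotient C c).map (doubleMap (hi := hi) h φ₀ φ₁ comm) = 0) :
    ∃ s : X₁ ⟶ Y₀, φ₁ = s ≫ g := by
  obtain ⟨H⟩ := (HomotopyCategory.quotient_map_eq_zero_iff _).1 hφ
  have hcomm : (doubleMap (hi := hi) h φ₀ φ₁ comm).f i₁ =
      H.hom i₁ i₀ ≫ (double g hi).d i₀ i₁ := by
    rw [H.comm i₁, prevD_eq _ hi, dNext, AddMonoidHom.mk'_apply,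
      double_d_eq_zero₀ _ _ _ _ h.symm, zero_comp, zero_add, zero_f, add_zero]
  rw [doubleMap_f₁, double_d g hi h] at hcomm
  refine ⟨(doubleXIso₁ f hi h).inv ≫ H.hom i₁ i₀ ≫ (doubleXIso₀ g hi).hom, ?_⟩
  simpa using (doubleXIso₁ f hi h).inv ≫= hcomm =≫ (doubleXIso₁ g hi h).hom

end Double

/-! ### Routes in the tree and their lexicographic order -/

namespace BrauerTree

section Routes

variable {V : Type v} [Finite V] {Γ : BrauerTree V}

/-- `L` lists the darts of a walk without backtracking in the tree that starts in `c`; this is the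
shape of the sequences of marked vertices of the diagrams with an end point on the `A`-cycle `c`. -/
def IsRoute : V → List Γ.Dart → Prop
  | _, [] => True
  | c, d :: L => d.fst = c ∧ (∀ d' ∈ L.head?, d' ≠ d.symm) ∧ IsRoute d.snd L

lemma isRoute_darts {a b : V} (p : Γ.graph.Walk a b) (hp : p.IsPath) :
    IsRoute (Γ := Γ) a p.darts := by
  induction p with
  | nil => trivial
  | cons h p ih =>
    rw [SimpleGraph.Walk.cons_isPath_iff] at hp
    refine ⟨rfl, ?_, ih hp.1⟩
    rintro d hd rfl
    exact hp.2 (p.dart_snd_mem_support_of_mem_darts (List.mem_of_mem_head? hd))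

lemma lexLt_irrefl (p : ℕ) (g : Γ.Dart) (L : List Γ.Dart) : ¬ Γ.LexLt p g L L := by
  induction L generalizing p g with
  | nil => simp [LexLt]
  | cons a as ih => simp [LexLt, ih]

lemma lexLt_trans {p : ℕ} {g : Γ.Dart} {L₁ L₂ L₃ : List Γ.Dart}
    (h₁₂ : Γ.LexLt p g L₁ L₂) (h₂₃ : Γ.LexLt p g L₂ L₃) : Γ.LexLt p g L₁ L₃ := by
  induction L₁ generalizing p g L₂ L₃ with
  | nil =>
    rcases L₂ with _ | ⟨b, bs⟩ <;> rcases L₃ with _ | ⟨d, ds⟩ <;> grind [LexLt]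
  | cons a as ih =>
    rcases L₂ with _ | ⟨b, bs⟩ <;> rcases L₃ with _ | ⟨d, ds⟩ <;> grind [LexLt, CycleLt]

lemma lexLt_trichotomy {p : ℕ} {g : Γ.Dart} {L₁ L₂ : List Γ.Dart} (h₁ : IsRoute g.fst L₁)
    (h₂ : IsRoute g.fst L₂) : Γ.LexLt p g L₁ L₂ ∨ L₁ = L₂ ∨ Γ.LexLt p g L₂ L₁ := by
  induction L₁ generalizing p g L₂ with
  | nil =>
    rcases L₂ with _ | ⟨b, bs⟩
    · exact .inr (.inl rfl)
    · simpa [LexLt] using p.even_or_odd.symm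
  | cons a as ih =>
    rcases L₂ with _ | ⟨b, bs⟩
    · simpa [LexLt] using p.even_or_odd
    · by_cases hab : a = b
      · subst hab
        rcases ih (p := p + 1) (g := a.symm) h₁.2.2 h₂.2.2 with h | rfl | h
        · exact .inl (.inl ⟨rfl, h⟩)
        · exact .inr (.inl rfl)
        · exact .inr (.inr (.inl ⟨rfl, h⟩))
      · rcases lt_trichotomy (Γ.dist g a) (Γ.dist g b) with h | h | h
        · exact .inr (.inr (.inr ⟨Ne.symm hab, h⟩))
        · exact absurd (eq_of_dist_eq h₁.1.symm h₂.1.symm h) hab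
        · exact .inl (.inr ⟨hab, h⟩)

instance isStrictTotalOrder_lexLt (p : ℕ) (g : Γ.Dart) :
    IsStrictTotalOrder {L : List Γ.Dart // IsRoute g.fst L} fun L L' => Γ.LexLt p g L L' where
  irrefl L := lexLt_irrefl p g L
  trans _ _ _ := lexLt_trans
  trichotomous L L' h h' :=
    Subtype.ext (((lexLt_trichotomy L.2 L'.2).resolve_left h).resolve_right h')

lemma dist_le_of_lexLt {p : ℕ} {g a b : Γ.Dart} {as bs : List Γ.Dart}
    (h : Γ.LexLt p g (b :: bs) (a :: as)) : Γ.dist g a ≤ Γ.dist g b := by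
  rcases h with ⟨rfl, -⟩ | ⟨-, h⟩
  exacts [le_rfl, le_of_lt h]

end Routes

end BrauerTree

/-! ### Complexes of lists of marked vertices -/

namespace BrauerTree

section ListComplex

variable {V : Type v} [Finite V] {Γ : BrauerTree V} (K : Type u) [Field K]

/-- The direct sum of the modules `A e_i` over the edges `i` of those darts in the list `L` whose
position satisfies `q`. -/
abbrev MarkedSum (L : List Γ.Dart) (q : ℕ → Prop) : Type (max u v) :=
  (k : {k : Fin L.length // q k}) → Γ.Proj K (Γ.toEdge (L.get k))

open Classical in
/-- `Diagram.coeff` for an arbitrary list `L` of marked vertices. -/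
noncomputable def listCoeff (L : List Γ.Dart) (k l : Fin L.length) : Γ.Alg K :=
  if (l : ℕ) = k + 1 then Γ.path K (L.get k).symm (L.get l)
  else if (k : ℕ) = l + 1 then Γ.path K (L.get k) (L.get l).symm
  else 0

/-- `Diagram.differential` for an arbitrary list `L` of marked vertices, whose sinks are at the
positions that satisfy `q`. -/
noncomputable def listDifferential (L : List Γ.Dart) (q : ℕ → Prop) :
    MarkedSum K L (fun k => ¬ q k) →ₗ[Γ.Alg K] MarkedSum K L q :=
  letI : Fintype {k : Fin L.length // ¬ q k} := Fintype.ofFinite _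
  LinearMap.pi fun l => ∑ k : {k : Fin L.length // ¬ q k},
    (Γ.mulMap K (Γ.toEdge (L.get k)) (Γ.toEdge (L.get l)) (listCoeff K L k l)).comp
      (LinearMap.proj k)

/-- `Diagram.complex` for an arbitrary list `L` of marked vertices, whose sinks are at the positions
that satisfy `q`. -/
noncomputable def listComplex (L : List Γ.Dart) (q : ℕ → Prop) : Γ.Cplx K :=
  HomologicalComplex.double (ModuleCat.ofHom (listDifferential K L q))
    (show (ComplexShape.up ℤ).Rel 0 1 from rfl)

lemma Diagram.complex_eq_listComplex (D : Γ.Diagram) (h : D.sinkFirst) :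
    D.complex K = listComplex K D.walk.darts Even := by
  have hq : (fun k => Even k ↔ D.sinkFirst) = (Even : ℕ → Prop) := by simp [h]
  exact congrArg (listComplex K D.walk.darts) hq

lemma nonempty_stalk_iso_listComplex (d : Γ.Dart) :
    Nonempty (stalk K 1 (Γ.toEdge d) ≅ listComplex K [d] Even) := by
  have : IsEmpty {k : Fin [d].length // ¬ Even (k : ℕ)} := ⟨fun ⟨k, hk⟩ => hk (by simp)⟩
  let _ : Unique {k : Fin [d].length // Even (k : ℕ)} :=
    { default := ⟨0, Even.zero⟩
      uniq k := Subtype.ext (Subsingleton.elim (α := Fin 1) _ _) }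
  exact ⟨singleIsoDouble _ _ zero_ne_one (ModuleCat.isZero_of_subsingleton _)
    (LinearEquiv.piUnique (R := Γ.Alg K) fun k : {k : Fin [d].length // Even (k : ℕ)} =>
      Γ.Proj K (Γ.toEdge ([d].get k))).symm.toModuleIso⟩

/-- Otherwise the second vertex of the walk would be `c`, and the second marked vertex of the
diagram would lie on the `A`-cycle `c` as well. -/
lemma Diagram.first_eq (D : Γ.Diagram) {c : V} (k : Fin D.walk.darts.length) (hk : (k : ℕ) = 0)
    (sink : D.IsSink k) (mem : c ∈ (D.dart k).edge)
    (only : ∀ i : Γ.Edge, D.OnDiagram i → c ∈ i.1 → i = Γ.toEdge (D.dart k)) : D.first = c := by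
  obtain ⟨a, b, p, hp, h2, s⟩ := D
  match p, hp, h2 with
  | .cons (v := c') h (.cons (v := c'') h' q), hp, h2 =>
    obtain ⟨k, hk'⟩ := k
    obtain rfl : k = 0 := hk
    rcases Sym2.mem_iff.1 (show c ∈ s(a, c') from mem) with rfl | rfl
    · rfl
    have hs : s := by simpa [Diagram.IsSink] using sink
    have second_eq_first := only (Γ.toEdge ⟨(c, c''), h'⟩)
      ⟨⟨(c, c''), h'⟩, (⟨(a, c), h⟩ : Γ.Dart).symm, ⟨⟨1, by simp⟩, ⟨0, hk'⟩,
        by simp [Diagram.IsSink, hs], sink, .inr ⟨rfl, rfl, rfl⟩⟩, 0, Nat.zero_le _, rfl⟩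
      (Sym2.mem_mk_left ..)
    rcases toEdge_eq_iff.1 second_eq_first with heq | heq
    · exact absurd (congrArg (fun d : Γ.Dart => d.fst) heq) h.ne'
    · obtain rfl : c'' = a := congrArg (fun d : Γ.Dart => d.snd) heq
      simp [SimpleGraph.Walk.cons_isPath_iff] at hp

variable {K} {c : V} {S : Γ.Cplx K} {L : List Γ.Dart}

lemma IsSinkList.ne_nil (h : Γ.IsSinkList c S L) : L ≠ [] := by
  rcases h with ⟨d, h⟩ | ⟨D, k, hk, sink, mem, only⟩
  exacts [List.cons_ne_nil _ _, List.ne_nil_of_length_pos k.pos]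

lemma IsSinkList.isRoute (h : Γ.IsSinkList c S L) : IsRoute c L := by
  rcases h with ⟨d, h⟩ | ⟨D, k, hk, sink, mem, only⟩
  · exact ⟨h, by simp, trivial⟩
  · rw [← D.first_eq k hk sink mem only]
    exact isRoute_darts D.walk D.isPath

lemma IsSinkList.nonempty_iso (h : Γ.IsSinkList c S L) :
    Nonempty (S ≅ listComplex K L Even) := by
  rcases h with ⟨d, h⟩ | ⟨D, k, hk, sink, mem, only⟩
  · exact nonempty_stalk_iso_listComplex K d
  · exact ⟨eqToIso (D.complex_eq_listComplex K (by simpa [Diagram.IsSink, hk] using sink))⟩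

end ListComplex

end BrauerTree

/-! ### Coordinates -/

namespace BrauerTree

section Coordinates

variable {V : Type v} [Finite V] {Γ : BrauerTree V} {K : Type u} [Field K]

lemma mul_e_of_mem_proj {i : Γ.Edge} {x : Γ.Alg K} (hx : x ∈ Γ.Proj K i) : x * Γ.e K i = x := by
  obtain ⟨y, rfl⟩ := Ideal.mem_span_singleton'.1 hx
  rw [mul_assoc, e_mul_self]

lemma mulMap_apply (i j : Γ.Edge) (p : Γ.Alg K) (x : Γ.Proj K i) :
    (Γ.mulMap K i j p x : Γ.Alg K) = x * p * Γ.e K j := by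
  simp [mulMap, mul_assoc]

variable (K) in
/-- The idempotent of the `i`-th dart of the list `L`, or zero beyond the end of `L`. -/
noncomputable def idemAt (L : List Γ.Dart) (i : ℕ) : Γ.Alg K :=
  if h : i < L.length then Γ.e K (Γ.toEdge L[i]) else 0

variable (K) in
/-- `listCoeff` between the positions `i` and `m` of the list `L`, as an element of `e_i A e_m`, or
zero beyond the end of `L`. -/
noncomputable def coeffAt (L : List Γ.Dart) (i m : ℕ) : Γ.Alg K :=
  if h : i < L.length ∧ m < L.length then
    idemAt K L i * listCoeff K L ⟨i, h.1⟩ ⟨m, h.2⟩ * idemAt K L m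
  else 0

variable {L L' : List Γ.Dart} {q : ℕ → Prop}

open Classical in
/-- The coordinate at the position `i` of an element of a direct sum indexed by some of the
positions of a list, or zero if `i` is not one of these positions. -/
noncomputable def coord (x : MarkedSum K L q) (i : ℕ) : Γ.Alg K :=
  if h : i < L.length ∧ q i then x ⟨⟨i, h.1⟩, h.2⟩ else 0

lemma coord_coe (x : MarkedSum K L q) (k : {k : Fin L.length // q k}) : coord x k.1 = x k :=
  dif_pos ⟨k.1.2, k.2⟩

lemma coord_of_not_lt (x : MarkedSum K L q) {i : ℕ} (h : ¬ i < L.length) : coord x i = 0 :=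
  dif_neg fun h' => h h'.1

lemma coord_of_not (x : MarkedSum K L q) {i : ℕ} (h : ¬ q i) : coord x i = 0 :=
  dif_neg fun h' => h h'.2

lemma coord_mul_idemAt (x : MarkedSum K L q) (i : ℕ) : coord x i * idemAt K L i = coord x i := by
  by_cases h : i < L.length ∧ q i
  · rw [coord, dif_pos h, idemAt, dif_pos h.1]
    exact mul_e_of_mem_proj (x ⟨⟨i, h.1⟩, h.2⟩).2
  · rw [coord, dif_neg h, zero_mul]

lemma coord_ext {x y : MarkedSum K L q} (h : ∀ i, q i → coord x i = coord y i) : x = y := by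
  funext k
  rw [Subtype.ext_iff, ← coord_coe, ← coord_coe, h _ k.2]

lemma coord_listDifferential (x : MarkedSum K L fun k => ¬ q k) {N : ℕ} (hN : L.length ≤ N) {m : ℕ}
    (hm : q m) :
    coord (listDifferential K L q x) m = ∑ i ∈ Finset.range N, coord x i * coeffAt K L i m := by
  by_cases hmL : m < L.length
  · let l : {l : Fin L.length // q l} := ⟨⟨m, hmL⟩, hm⟩
    let _ : Fintype {k : Fin L.length // ¬ q k} := Fintype.ofFinite _
    refine (coord_coe _ l).trans ?_
    rw [listDifferential, LinearMap.pi_apply, LinearMap.sum_apply, AddSubmonoidClass.coe_finsetSum]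
    refine Finset.sum_of_injOn (fun k => (k.1 : ℕ)) (fun k _ k' _ h => Subtype.ext (Fin.ext h))
      (fun k _ => by simpa using k.1.2.trans_le hN) (fun i _ hi => ?_) (fun k _ => ?_)
    · rw [coord, dif_neg, zero_mul]
      rintro ⟨hiL, hqi⟩
      exact hi ⟨⟨⟨i, hiL⟩, hqi⟩, by simp, rfl⟩
    · rw [coeffAt, dif_pos ⟨k.1.2, hmL⟩, ← mul_assoc, ← mul_assoc, coord_mul_idemAt, coord_coe,
        idemAt, dif_pos hmL, LinearMap.comp_apply, mulMap_apply, LinearMap.proj_apply]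
      rfl
  · simp [coord_of_not_lt _ hmL, coeffAt, hmL]

variable (L L' q) in
/-- The homomorphism between two direct sums of projective modules that multiplies the coordinate
at the position `i` by `F i`. -/
noncomputable def diagMap (F : ℕ → Γ.Alg K) : MarkedSum K L q →ₗ[Γ.Alg K] MarkedSum K L' q :=
  LinearMap.pi fun l => if h : (l : ℕ) < L.length then
    (Γ.mulMap K (Γ.toEdge (L.get ⟨l, h⟩)) (Γ.toEdge (L'.get l)) (F l)).comp
      (LinearMap.proj (⟨⟨l, h⟩, l.2⟩ : {k : Fin L.length // q k})) else 0

lemma coord_diagMap {F : ℕ → Γ.Alg K} (hF : ∀ i, F i * idemAt K L' i = F i)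
    (x : MarkedSum K L q) (m : ℕ) : coord (diagMap L L' q F x) m = coord x m * F m := by
  by_cases hq : q m
  · by_cases hm : m < L'.length
    · let l : {l : Fin L'.length // q l} := ⟨⟨m, hm⟩, hq⟩
      refine (coord_coe _ l).trans ?_
      rw [← hF, diagMap, LinearMap.pi_apply, idemAt, dif_pos hm]
      by_cases hmL : m < L.length
      · rw [dif_pos hmL, LinearMap.comp_apply, mulMap_apply, coord, dif_pos ⟨hmL, hq⟩, mul_assoc]
        rfl
      · rw [dif_neg hmL, coord_of_not_lt x hmL, zero_mul]
        rfl
    · rw [coord_of_not_lt _ hm, ← hF, idemAt, dif_neg hm, mul_zero, mul_zero]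
  · rw [coord_of_not _ hq, coord_of_not _ hq, zero_mul]

lemma diagMap_comm {F : ℕ → Γ.Alg K} (hF : ∀ i, F i * idemAt K L' i = F i)
    (hcomm : ∀ i m, ¬ q i → q m → F i * coeffAt K L' i m = coeffAt K L i m * F m) :
    listDifferential K L' q ∘ₗ diagMap L L' (fun k => ¬ q k) F =
      diagMap L L' q F ∘ₗ listDifferential K L q := by
  refine LinearMap.ext fun x => coord_ext fun m hm => ?_
  rw [LinearMap.comp_apply, LinearMap.comp_apply, coord_diagMap hF,
    coord_listDifferential _ (le_max_right L.length L'.length) hm,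
    coord_listDifferential _ (le_max_left L.length L'.length) hm]
  refine (Finset.sum_congr rfl fun i _ => ?_).trans (Finset.sum_mul ..).symm
  by_cases hi : q i
  · simp only [coord_of_not x (not_not.2 hi), coord_diagMap hF, zero_mul]
  · rw [coord_diagMap hF, mul_assoc, mul_assoc, hcomm i m hi hm]

lemma idemAt_succ (a : Γ.Dart) (L : List Γ.Dart) (i : ℕ) :
    idemAt K (a :: L) (i + 1) = idemAt K L i := by
  simp [idemAt]

lemma coeffAt_succ_succ (a : Γ.Dart) (L : List Γ.Dart) (i m : ℕ) :
    coeffAt K (a :: L) (i + 1) (m + 1) = coeffAt K L i m := by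
  simp [coeffAt, idemAt, listCoeff]

lemma coeffAt_eq_zero (L : List Γ.Dart) {i m : ℕ} (h : m ≠ i + 1) (h' : i ≠ m + 1) :
    coeffAt K L i m = 0 := by
  simp [coeffAt, listCoeff, h, h']

lemma coeffAt_of_not_lt (L : List Γ.Dart) {i m : ℕ} (h : ¬ (i < L.length ∧ m < L.length)) :
    coeffAt K L i m = 0 :=
  dif_neg h

lemma e_mul_path (a b : Γ.Dart) : Γ.e K (Γ.toEdge a) * Γ.path K a b = arc K a b := rfl

lemma coeffAt_zero_one {a b : Γ.Dart} (hab : a.snd = b.fst) (L : List Γ.Dart) :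
    coeffAt K (a :: b :: L) 0 1 = arc K a.symm b := by
  have hcoeff : coeffAt K (a :: b :: L) 0 1 =
      Γ.e K (Γ.toEdge a) * Γ.path K a.symm b * Γ.e K (Γ.toEdge b) := by
    simp [coeffAt, idemAt, listCoeff]
  rw [hcoeff, ← toEdge_symm a, e_mul_path, arc_mul_e K hab]

lemma coeffAt_one_zero {a b : Γ.Dart} (hab : a.snd = b.fst) (L : List Γ.Dart) :
    coeffAt K (a :: b :: L) 1 0 = arc K b a.symm := by
  have hcoeff : coeffAt K (a :: b :: L) 1 0 =
      Γ.e K (Γ.toEdge b) * Γ.path K b a.symm * Γ.e K (Γ.toEdge a) := by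
    simp [coeffAt, idemAt, listCoeff]
  rw [hcoeff, ← toEdge_symm a, e_mul_path, arc_mul_e K (b := a.symm) hab.symm]

end Coordinates

end BrauerTree

/-! ### Comparison maps -/

namespace BrauerTree

section Comparison

variable {V : Type v} [Finite V] {Γ : BrauerTree V} {K : Type u} [Field K]

variable (K) in
open Classical in
/-- The components of the comparison map between the complexes of two lists of marked vertices: the
identity up to the last common position, the directed subpath of the `A`-cycle at the first
position where the lists differ, and zero from there on. -/
noncomputable def comparison : List Γ.Dart → List Γ.Dart → ℕ → Γ.Alg K
  | a :: _, b :: _, 0 => arc K a b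
  | a :: as, b :: bs, i + 1 => if a = b then comparison as bs i else 0
  | _, _, _ => 0

lemma comparison_mul_idemAt {c : V} {L L' : List Γ.Dart} (hL : IsRoute c L) (hL' : IsRoute c L')
    (i : ℕ) : comparison K L L' i * idemAt K L' i = comparison K L L' i := by
  induction L generalizing c L' i with
  | nil => simp [comparison]
  | cons a as ih =>
    rcases L' with _ | ⟨b, bs⟩
    · simp [comparison]
    · rcases i with _ | i
      · exact arc_mul_e K (hL.1.trans hL'.1.symm)
      · by_cases hab : a = b
        · subst hab
          simpa [comparison, idemAt_succ] using ih hL.2.2 hL'.2.2 i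
        · simp [comparison, hab]

variable {p : ℕ} {g a b : Γ.Dart} {as bs : List Γ.Dart}

lemma lexLt_tail (h : Γ.LexLt p g (a :: bs) (a :: as)) : Γ.LexLt (p + 1) a.symm bs as :=
  (h.resolve_right fun h' => h'.1 rfl).2

lemma comparison_zero_mul_coeffAt (hp : Even p) (ha : IsRoute g.fst (a :: as))
    (hb : IsRoute g.fst (b :: bs)) (h : Γ.LexLt p g (b :: bs) (a :: as)) :
    comparison K (a :: as) (b :: bs) 0 * coeffAt K (b :: bs) 0 1 =
      coeffAt K (a :: as) 0 1 * comparison K (a :: as) (b :: bs) 1 := by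
  rcases bs with _ | ⟨b₁, bs⟩
  · rcases as <;> simp [coeffAt_of_not_lt, comparison]
  rw [coeffAt_zero_one hb.2.2.1.symm, comparison]
  by_cases hab : a = b
  · subst hab
    rcases as with _ | ⟨a₁, as⟩
    · exact absurd (lexLt_tail h) (Nat.not_even_iff_odd.2 hp.add_one)
    · have hdist : Γ.dist a.symm a₁ + Γ.dist a₁ b₁ = Γ.dist a.symm b₁ :=
        dist_add_dist ha.2.2.1.symm hb.2.2.1.symm (dist_le_of_lexLt (lexLt_tail h))
      rw [coeffAt_zero_one ha.2.2.1.symm, comparison, if_pos rfl, comparison,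
        arc_mul_arc K ha.2.2.1.symm hdist, arc_self, ← toEdge_symm, e_mul_arc]
  · rw [arc_mul_arc_symm K (ha.1.trans hb.1.symm) hab hb.2.2.1.symm (hb.2.1 _ rfl).symm, comparison,
      if_neg hab, mul_zero]

lemma comparison_one_mul_coeffAt (hp : Odd p) (ha : IsRoute g.fst (a :: as))
    (hb : IsRoute g.fst (b :: bs)) (h : Γ.LexLt p g (b :: bs) (a :: as)) :
    comparison K (a :: as) (b :: bs) 1 * coeffAt K (b :: bs) 1 0 =
      coeffAt K (a :: as) 1 0 * comparison K (a :: as) (b :: bs) 0 := by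
  rcases as with _ | ⟨a₁, as⟩
  · rcases bs <;> simp [coeffAt_of_not_lt, comparison]
  rw [coeffAt_one_zero ha.2.2.1.symm, comparison]
  by_cases hab : a = b
  · subst hab
    rcases bs with _ | ⟨b₁, bs⟩
    · exact absurd (lexLt_tail h) (Nat.not_odd_iff_even.2 hp.add_one)
    · have hdist : Γ.dist a₁ b₁ + Γ.dist b₁ a.symm = Γ.dist a₁ a.symm :=
        dist_add_dist_back ha.2.2.1.symm hb.2.2.1.symm (ha.2.1 _ rfl).symm
          (dist_le_of_lexLt (lexLt_tail h))
      rw [coeffAt_one_zero hb.2.2.1.symm, comparison, if_pos rfl, comparison, arc_self,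
        arc_mul_arc K (ha.2.2.1.trans hb.2.2.1.symm) hdist, ← toEdge_symm,
        arc_mul_e K (b := a.symm) ha.2.2.1]
  · rw [comparison, if_neg hab, zero_mul]
    exact (arc_mul_arc_symm K (b := a.symm) ha.2.2.1 (ha.2.1 _ rfl) (ha.1.trans hb.1.symm) hab).symm

lemma comparison_mul_coeffAt {L L' : List Γ.Dart} (hL : IsRoute g.fst L) (hL' : IsRoute g.fst L')
    (h : Γ.LexLt p g L' L) {i m : ℕ} (hi : Even (i + p)) (hm : Odd (m + p)) :
    comparison K L L' i * coeffAt K L' i m = coeffAt K L i m * comparison K L L' m := by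
  induction L generalizing p g L' i m with
  | nil => simp [comparison, coeffAt_of_not_lt]
  | cons a as ih =>
    rcases L' with _ | ⟨b, bs⟩
    · simp [comparison, coeffAt_of_not_lt]
    match i, m with
    | 0, 0 => exact absurd hi (Nat.not_even_iff_odd.2 hm)
    | 0, 1 => exact comparison_zero_mul_coeffAt (by simpa using hi) hL hL' h
    | 1, 0 => exact comparison_one_mul_coeffAt (by simpa using hm) hL hL' h
    | 0, m + 2 => simp [coeffAt_eq_zero]
    | i + 2, 0 => simp [coeffAt_eq_zero]
    | i + 1, m + 1 =>
      rw [coeffAt_succ_succ, coeffAt_succ_succ, comparison, comparison]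
      split_ifs with hab
      · subst hab
        exact ih (g := a.symm) hL.2.2 hL'.2.2 (lexLt_tail h) (by rwa [← add_assoc, add_right_comm])
          (by rwa [← add_assoc, add_right_comm])
      · rw [zero_mul, mul_zero]

/-- The morphism from the complex of `L` to the complex of a smaller list `L'` of marked vertices
whose components are those of `comparison`. -/
noncomputable def comparisonMap {L L' : List Γ.Dart} (hL : IsRoute g.fst L)
    (hL' : IsRoute g.fst L') (h : Γ.LexLt 1 g L' L) :
    listComplex K L Even ⟶ listComplex K L' Even :=
  doubleMap zero_ne_one (ModuleCat.ofHom (diagMap L L' (fun k => ¬ Even k) (comparison K L L')))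
    (ModuleCat.ofHom (diagMap L L' Even (comparison K L L'))) (by
      rw [← ModuleCat.ofHom_comp, ← ModuleCat.ofHom_comp,
        diagMap_comm (comparison_mul_idemAt hL hL') fun i m hi hm =>
          comparison_mul_coeffAt hL hL' h (Nat.even_add_one.2 hi) hm.add_one])

lemma arc_ne_sum_mul_coeffAt {a d : Γ.Dart} {ds : List Γ.Dart} (had : a.fst = d.fst)
    (hd : IsRoute a.fst (d :: ds)) (s : Finset ℕ) (x : ℕ → Γ.Alg K) :
    arc K a d ≠ ∑ i ∈ s, x i * coeffAt K (d :: ds) i 0 := by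
  obtain ⟨f, hf_arc, hf_mul⟩ := exists_linearMap_arc (K := K) a
  have hf_coeffAt : ∀ i, f (x i * coeffAt K (d :: ds) i 0) = 0 := by
    intro i
    by_cases hi : i = 1
    · subst hi
      rcases ds with _ | ⟨d₁, ds⟩
      · simp [coeffAt_of_not_lt]
      · rw [coeffAt_one_zero hd.2.2.1.symm]
        refine hf_mul _ _ _ hd.2.2.1 (hd.2.1 _ rfl) ?_
        rw [hd.2.2.1, had]
        exact d.snd_ne_fst
    · rw [coeffAt_eq_zero _ (by omega) hi, mul_zero, map_zero]
  intro h
  simpa [hf_arc d had, hf_coeffAt] using congrArg f h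

lemma quotient_map_comparisonMap_comp_ne_zero {L₁ L₂ L₃ : List Γ.Dart} (h₁ : IsRoute g.fst L₁)
    (h₂ : IsRoute g.fst L₂) (h₃ : IsRoute g.fst L₃) (hne₁ : L₁ ≠ []) (hne₂ : L₂ ≠ [])
    (hne₃ : L₃ ≠ []) (h₂₁ : Γ.LexLt 1 g L₂ L₁) (h₃₂ : Γ.LexLt 1 g L₃ L₂) :
    (HomotopyCategory.quotient _ _).map
      (comparisonMap (K := K) h₁ h₂ h₂₁ ≫ comparisonMap h₂ h₃ h₃₂) ≠ 0 := by
  intro h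
  obtain ⟨s, hs⟩ := exists_eq_comp_of_quotient_map_doubleMap_eq_zero zero_ne_one
    ((congrArg _ (doubleMap_comp ..).symm).trans h)
  obtain ⟨a, as, rfl⟩ := List.exists_cons_of_ne_nil hne₁
  obtain ⟨b, bs, rfl⟩ := List.exists_cons_of_ne_nil hne₂
  obtain ⟨d, ds, rfl⟩ := List.exists_cons_of_ne_nil hne₃
  let x : MarkedSum K (a :: as) Even := fun k => ⟨Γ.e K (Γ.toEdge _), Ideal.subset_span rfl⟩
  have hx : coord x 0 = Γ.e K (Γ.toEdge a) := coord_coe x ⟨⟨0, by simp⟩, by simp⟩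
  have had : a.fst = d.fst := h₁.1.trans h₃.1.symm
  have hdist : Γ.dist a b + Γ.dist b d = Γ.dist a d := by
    have hga := dist_add_dist h₁.1.symm h₂.1.symm (dist_le_of_lexLt h₂₁)
    have hgb := dist_add_dist h₂.1.symm h₃.1.symm (dist_le_of_lexLt h₃₂)
    have hgd := dist_add_dist h₁.1.symm h₃.1.symm
      ((dist_le_of_lexLt h₂₁).trans (dist_le_of_lexLt h₃₂))
    omega
  have heval := congrArg (fun f => coord (f.hom x) 0) hs
  simp only [ModuleCat.hom_comp, ModuleCat.hom_ofHom, LinearMap.comp_apply,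
    coord_diagMap (comparison_mul_idemAt h₁ h₂), coord_diagMap (comparison_mul_idemAt h₂ h₃), hx,
    comparison, e_mul_arc, arc_mul_arc K (h₁.1.trans h₂.1.symm) hdist,
    coord_listDifferential _ le_rfl Even.zero] at heval
  exact arc_ne_sum_mul_coeffAt had (h₁.1.symm ▸ h₃) _ _ heval

end Comparison

end BrauerTree

/-! ### Summands and the endomorphism algebra -/

namespace BrauerTree

section Summands

variable {V : Type v} [Finite V] {Γ : BrauerTree V} {K : Type u} [Field K] {T : Γ.Cplx K}
  {W : Type w} [Finite W] {Δ : BrauerTree W} {φ : EndIso Δ T}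

variable (φ) in
/-- The element of the Brauer tree algebra that corresponds to an endomorphism of `T`. -/
noncomputable def ofEnd (f : Γ.toHo K T ⟶ Γ.toHo K T) : Δ.Alg K :=
  φ.symm (MulOpposite.op (End.of f))

lemma ofEnd_mul_ofEnd (f g : Γ.toHo K T ⟶ Γ.toHo K T) :
    ofEnd φ f * ofEnd φ g = ofEnd φ (f ≫ g) := by
  rw [ofEnd, ofEnd, ← map_mul, ← MulOpposite.op_mul]
  rfl

lemma ofEnd_eq_e {x : Δ.Edge} {f : Γ.toHo K T ⟶ Γ.toHo K T} (h : f = (φ (Δ.e K x)).unop) :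
    ofEnd φ f = Δ.e K x :=
  h ▸ φ.symm_apply_apply _

lemma eq_zero_of_ofEnd_eq_zero {f : Γ.toHo K T ⟶ Γ.toHo K T} (h : ofEnd φ f = 0) : f = 0 :=
  congrArg MulOpposite.unop (φ.symm.injective (h.trans (map_zero φ.symm).symm))

lemma IsSummandAt.of_iso {x : Δ.Edge} {S S' : Γ.Cplx K} (h : IsSummandAt φ x S) (e : S ≅ S') :
    IsSummandAt φ x S' := by
  obtain ⟨i, p, hip, hpi⟩ := h
  let e' := (HomotopyCategory.quotient _ _).mapIso e
  exact ⟨e'.inv ≫ i, p ≫ e'.hom, by rw [Category.assoc, reassoc_of% hip, e'.inv_hom_id],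
    by rw [Category.assoc, e'.hom_inv_id_assoc, hpi]⟩

lemma IsSummandAt.unique {x y : Δ.Edge} {S : Γ.Cplx K} (hx : IsSummandAt φ x S)
    (hy : IsSummandAt φ y S) : x = y := by
  obtain ⟨i, p, hip, hpi⟩ := hx
  obtain ⟨i', p', hip', hpi'⟩ := hy
  refine eq_of_mul_eq_e (x := ofEnd φ (p ≫ i')) (y := ofEnd φ (p' ≫ i)) ?_ ?_
  · rw [ofEnd_mul_ofEnd, Category.assoc, reassoc_of% hip', ofEnd_eq_e hpi]
  · rw [ofEnd_mul_ofEnd, Category.assoc, reassoc_of% hip, ofEnd_eq_e hpi']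

lemma dist_add_dist_le_of_comp_ne_zero {a b d : Δ.Dart} (hab : a.fst = b.fst) (hbd : b.fst = d.fst)
    {A B D : Γ.Cplx K} (hA : IsSummandAt φ (Δ.toEdge a) A) (hB : IsSummandAt φ (Δ.toEdge b) B)
    (hD : IsSummandAt φ (Δ.toEdge d) D) {f : Γ.toHo K A ⟶ Γ.toHo K B}
    {g : Γ.toHo K B ⟶ Γ.toHo K D} (hfg : f ≫ g ≠ 0) :
    Δ.dist a b + Δ.dist b d ≤ Δ.period a := by
  obtain ⟨iA, pA, hipA, hpiA⟩ := hA
  obtain ⟨iB, pB, hipB, hpiB⟩ := hB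
  obtain ⟨iD, pD, hipD, hpiD⟩ := hD
  refine dist_add_dist_le_of_mul_ne_zero K hab hbd
    (x := ofEnd φ (pA ≫ f ≫ iB)) (y := ofEnd φ (pB ≫ g ≫ iD)) ?_ ?_ fun h => hfg ?_
  · rw [← ofEnd_eq_e hpiA, ← ofEnd_eq_e hpiB, ofEnd_mul_ofEnd, ofEnd_mul_ofEnd]
    simp only [Category.assoc, reassoc_of% hipA, reassoc_of% hipB]
  · rw [← ofEnd_eq_e hpiB, ← ofEnd_eq_e hpiD, ofEnd_mul_ofEnd, ofEnd_mul_ofEnd]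
    simp only [Category.assoc, reassoc_of% hipB, reassoc_of% hipD]
  · rw [ofEnd_mul_ofEnd] at h
    calc f ≫ g = iA ≫ ((pA ≫ f ≫ iB) ≫ pB ≫ g ≫ iD) ≫ pD := by
          simp only [Category.assoc, reassoc_of% hipA, reassoc_of% hipB, hipD, Category.comp_id]
      _ = 0 := by rw [eq_zero_of_ofEnd_eq_zero h, zero_comp, comp_zero]

lemma IsSinkListAt.isRoute {c : V} {x : Δ.Edge} {L : List Γ.Dart} (h : IsSinkListAt φ c x L) :
    IsRoute c L := by
  obtain ⟨_, -, hL⟩ := h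
  exact hL.isRoute

lemma IsSinkListAt.ne_nil {c : V} {x : Δ.Edge} {L : List Γ.Dart} (h : IsSinkListAt φ c x L) :
    L ≠ [] := by
  obtain ⟨_, -, hL⟩ := h
  exact hL.ne_nil

lemma IsSinkListAt.isSummandAt {c : V} {x : Δ.Edge} {L : List Γ.Dart}
    (h : IsSinkListAt φ c x L) : IsSummandAt φ x (listComplex K L Even) := by
  obtain ⟨_, hS, hL⟩ := h
  exact hS.of_iso hL.nonempty_iso.some

lemma IsSinkListAt.unique {c c' : V} {x y : Δ.Edge} {L : List Γ.Dart} (hx : IsSinkListAt φ c x L)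
    (hy : IsSinkListAt φ c' y L) : x = y :=
  hx.isSummandAt.unique hy.isSummandAt

lemma dist_add_dist_le_of_lexLt {a b d : Δ.Dart} (hab : a.fst = b.fst) (hbd : b.fst = d.fst)
    {g : Γ.Dart} {L₁ L₂ L₃ : List Γ.Dart} (h₁ : IsSinkListAt φ g.fst (Δ.toEdge a) L₁)
    (h₂ : IsSinkListAt φ g.fst (Δ.toEdge b) L₂) (h₃ : IsSinkListAt φ g.fst (Δ.toEdge d) L₃)
    (h₂₁ : Γ.LexLt 1 g L₂ L₁) (h₃₂ : Γ.LexLt 1 g L₃ L₂) :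
    Δ.dist a b + Δ.dist b d ≤ Δ.period a := by
  have hcomp := quotient_map_comparisonMap_comp_ne_zero (K := K) h₁.isRoute h₂.isRoute h₃.isRoute
    h₁.ne_nil h₂.ne_nil h₃.ne_nil h₂₁ h₃₂
  rw [Functor.map_comp] at hcomp
  exact dist_add_dist_le_of_comp_ne_zero hab hbd h₁.isSummandAt h₂.isSummandAt h₃.isSummandAt hcomp

end Summands

end BrauerTree

theorem cyclic_order_at_sink_cycle_general {K : Type u} [Field K] {V : Type v} [Finite V]
    (Γ : BrauerTree V) (T : Γ.Cplx K) {W : Type w} [Finite W] (Δ : BrauerTree W)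
    (φ : BrauerTree.EndIso Δ T) (c : V) (z : W) (L : {d : Δ.Dart // d.fst = z} → List Γ.Dart)
    (hL : ∀ d, BrauerTree.IsSinkListAt φ c (Δ.toEdge d.1) (L d)) (g : Γ.Dart) (hg : g.fst = c) :
    IsStrictTotalOrder {d : Δ.Dart // d.fst = z} (fun a b => Γ.LexLt 1 g (L a) (L b)) ∧
      ∀ a b : {d : Δ.Dart // d.fst = z},
        Δ.next a.1 = b.1 ↔ GluedNext (fun a b => Γ.LexLt 1 g (L a) (L b)) a b := by
  subst hg
  have hfst : ∀ a b : {d : Δ.Dart // d.fst = z}, a.1.fst = b.1.fst :=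
    fun a b => a.2.trans b.2.symm
  have L_injective : Function.Injective L := fun a b h =>
    Subtype.ext (BrauerTree.eq_of_toEdge_eq ((hL a).unique (h ▸ hL b)) (hfst a b))
  let route : {d : Δ.Dart // d.fst = z} ↪ {L : List Γ.Dart // BrauerTree.IsRoute g.fst L} :=
    ⟨fun d => ⟨L d, (hL d).isRoute⟩, fun a b h => L_injective (congrArg Subtype.val h)⟩
  have isStrictTotalOrder : IsStrictTotalOrder {d : Δ.Dart // d.fst = z}
      (fun a b => Γ.LexLt 1 g (L a) (L b)) :=
    (RelEmbedding.preimage route fun L L' => Γ.LexLt 1 g L L').isStrictTotalOrder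
  exact ⟨isStrictTotalOrder, BrauerTree.next_eq_iff_gluedNext fun a b d hba hdb =>
    BrauerTree.dist_add_dist_le_of_lexLt (hfst a b) (hfst b d) (hL a) (hL b) (hL d) hba hdb⟩

/-- Let `T` be a basic two-term tilting complex over the Brauer tree algebra of `Γ`, `Δ` the Brauer
tree of its endomorphism algebra, and `z` a vertex of `Δ` that corresponds to the sinks on the
`A`-cycle `c`.  The lexicographic order is linear on the edges at `z`, and the cyclic ordering of
the edges at `z` is the one glued from it. -/
theorem cyclic_order_at_sink_cycle {K : Type u} [Field K] [IsAlgClosed K]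
    {V : Type v} [Finite V] (Γ : BrauerTree V)
    (T : Γ.Cplx K) (two_term : BrauerTree.IsTwoTerm T) (tilting : BrauerTree.IsTilting T)
    (basic : BrauerTree.IsBasic T)
    {W : Type w} [Finite W] (Δ : BrauerTree W) (φ : BrauerTree.EndIso Δ T)
    (c : V) (z : W) (sink_vertex : BrauerTree.IsSinkVertex φ c z)
    (L : {d : Δ.Dart // d.fst = z} → List Γ.Dart)
    (hL : ∀ d, BrauerTree.IsSinkListAt φ c (Δ.toEdge d.1) (L d))
    (g : Γ.Dart) (hg : g.fst = c) :
    IsStrictTotalOrder {d : Δ.Dart // d.fst = z} (fun a b => Γ.LexLt 1 g (L a) (L b)) ∧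
      ∀ a b : {d : Δ.Dart // d.fst = z},
        Δ.next a.1 = b.1 ↔ GluedNext (fun a b => Γ.LexLt 1 g (L a) (L b)) a b :=
  cyclic_order_at_sink_cycle_general Γ T Δ φ c z L hL g hg
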